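/- Let d ≥ 3 be a fixed integer and p an odd prime with gcd(p,d) = 1. For every ε > 0 there exists N such that for all n ≥ N with nd even, the number of fixed-point-free involutions σ of [n]×[d] for which the matrix A(σ), reduced modulo p, is singular over F_p (i.e., has determinant 0 in F_p) is at most ((1+ε)/(p−1))·(nd)!/(2^{nd/2}(nd/2)!). -/

import Mathlib

/-!
A singular matrix over `𝔽_p` has at least `p` kernel vectors and every matrix has at least one, so
`(p - 1) #{σ | A(σ) singular} + #{σ}` is at most the number of pairs `(σ, v)` with `A(σ) v = 0`.
It suffices to bound the latter by `(2 + o(1)) #{σ}`.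

Call a vector *near constant* if it is constant outside a small proportion of the coordinates.
Among these, `v = 0` contributes `#{σ}`; a nonzero `v` close to `0` is annihilated with small
probability, since revealing the partners of the half-edges at its support must produce many
coincidences; and a `v` close to `a ≠ 0` is never annihilated, because `d a ≠ 0` in `𝔽_p`.

For the other vectors, Fourier inversion writes `p ^ n #{σ | A(σ) v = 0}` as `∑ t, S v t`, where
`S v t = ∑ σ, ψ ⟨t, A(σ) v⟩` is symmetric because `A(σ)` is. By symmetry the pairs with `v` far from
constant and `t` near constant contribute as much as the near-constant vectors themselves, up to a
negligible number of terms: this is the second `#{σ}`. When `v` and `t` are both far from constant,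
`S v t` is a coefficient of the `nd / 2`-th power of the quadratic form with matrix
`ψ (a' b + a b')` on `𝔽_p ^ 2`. Cauchy's estimate at the type of the coloring `(v, t)` reduces the
claim to a bound for this form at vectors of given absolute values, which comes from interpolating
between the `L²` and the trivial bound by the maximum modulus principle. Equality would force the
distribution of `(v, t)` to live on a line `{a} × 𝔽_p` or `𝔽_p × {b}`; by compactness the bound has
an exponential gain over all the remaining distributions.
-/

open Finset

/-- Adjacency matrix of the configuration model. -/
def adjMat (n d : ℕ) (σ : Equiv.Perm (Fin n × Fin d)) : Matrix (Fin n) (Fin n) ℤ :=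
  fun k l => ((Finset.univ.filter (fun i : Fin d => (σ (k, i)).1 = l)).card : ℤ)

section Matchings

variable {X : Type*} {Y : Finset X} {x y : X} {σ τ : Equiv.Perm X}

lemma involutive_mul_of_commute (hσ : Function.Involutive σ) (hτ : Function.Involutive τ)
    (h : Commute σ τ) : Function.Involutive (σ * τ) := by
  have hmul : (σ * τ) * (σ * τ) = 1 := by
    rw [h.symm.mul_mul_mul_comm, show σ * σ = 1 from Equiv.ext hσ, show τ * τ = 1 from Equiv.ext hτ,
      one_mul]
  exact fun z => DFunLike.congr_fun hmul z

variable [Fintype X] [DecidableEq X]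

/-- The perfect matchings of the set `Y`, encoded as the involutions of the ambient type that move
exactly the points of `Y`. -/
def perfectMatchings (Y : Finset X) : Finset (Equiv.Perm X) :=
  {σ | (∀ x, σ (σ x) = x) ∧ σ.support = Y}

lemma mem_perfectMatchings :
    σ ∈ perfectMatchings Y ↔ Function.Involutive σ ∧ σ.support = Y := by
  simp only [perfectMatchings, mem_filter_univ, Function.Involutive]

lemma mem_perfectMatchings_univ :
    σ ∈ perfectMatchings univ ↔ (∀ x, σ (σ x) = x) ∧ ∀ x, σ x ≠ x := by
  simp only [mem_perfectMatchings, Function.Involutive, eq_univ_iff_forall,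
    Equiv.Perm.mem_support]

lemma perfectMatchings_empty : perfectMatchings (∅ : Finset X) = {1} := by
  ext σ
  simp only [mem_perfectMatchings, Equiv.Perm.support_eq_empty_iff, mem_singleton,
    and_iff_right_iff_imp]
  rintro rfl x
  rfl

lemma apply_mem_of_mem_perfectMatchings (hσ : σ ∈ perfectMatchings Y) (hx : x ∈ Y) :
    σ x ∈ Y.erase x := by
  obtain ⟨-, rfl⟩ := mem_perfectMatchings.1 hσ
  exact mem_erase.2 ⟨Equiv.Perm.mem_support.1 hx, Equiv.Perm.apply_mem_support.2 hx⟩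

lemma fixed_of_mem_perfectMatchings (hσ : σ ∈ perfectMatchings Y) (hx : x ∉ Y) : σ x = x := by
  obtain ⟨-, rfl⟩ := mem_perfectMatchings.1 hσ
  exact Equiv.Perm.notMem_support.1 hx

lemma swap_mul_mem_perfectMatchings (hx : x ∈ Y) (hy : y ∈ Y.erase x)
    (hτ : τ ∈ perfectMatchings ((Y.erase x).erase y)) :
    Equiv.swap x y * τ ∈ perfectMatchings Y := by
  have hyx : y ≠ x := ne_of_mem_erase hy
  obtain ⟨hinv, hsupp⟩ := mem_perfectMatchings.1 hτ
  have hdisj : (Equiv.swap x y).Disjoint τ := by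
    rw [Equiv.Perm.disjoint_iff_disjoint_support, Equiv.Perm.support_swap hyx.symm, hsupp]
    simp
  refine mem_perfectMatchings.2
    ⟨involutive_mul_of_commute (Equiv.swap_apply_self x y) hinv hdisj.commute, ?_⟩
  rw [hdisj.support_mul, Equiv.Perm.support_swap hyx.symm, hsupp, insert_union, singleton_union,
    insert_erase hy, insert_erase hx]

lemma swap_apply_mul_mem_perfectMatchings (hσ : σ ∈ perfectMatchings Y) (x : X) :
    Equiv.swap x (σ x) * σ ∈ perfectMatchings ((Y.erase x).erase (σ x)) := by
  obtain ⟨hinv, hsupp⟩ := mem_perfectMatchings.1 hσ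
  have hcomm : Commute (Equiv.swap x (σ x)) σ := by
    rw [commute_iff_eq, Equiv.mul_swap_eq_swap_mul, hinv x, Equiv.swap_comm]
  refine mem_perfectMatchings.2
    ⟨involutive_mul_of_commute (Equiv.swap_apply_self x (σ x)) hinv hcomm, ?_⟩
  ext z
  rw [mem_erase, mem_erase, ← hsupp, Equiv.Perm.mem_support, Equiv.Perm.mem_support,
    Equiv.Perm.mul_apply]
  rcases eq_or_ne z x with rfl | hzx
  · simp
  rcases eq_or_ne z (σ x) with rfl | hzσ
  · simp [hinv x]
  · rw [Equiv.swap_apply_of_ne_of_ne (fun h => hzσ (by rw [← h, hinv z]))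
      (fun h => hzx (σ.injective h))]
    simp [hzx, hzσ]

lemma sum_perfectMatchings {M : Type*} [AddCommMonoid M] (hx : x ∈ Y) (f : Equiv.Perm X → M) :
    ∑ σ ∈ perfectMatchings Y, f σ =
      ∑ y ∈ Y.erase x, ∑ τ ∈ perfectMatchings ((Y.erase x).erase y), f (Equiv.swap x y * τ) := by
  rw [sum_sigma']
  refine sum_bij' (fun σ _ => (⟨σ x, Equiv.swap x (σ x) * σ⟩ : (_ : X) × Equiv.Perm X))
    (fun q _ => Equiv.swap x q.1 * q.2) (fun σ hσ => ?_) ?_ (fun σ _ => ?_) ?_ (fun σ _ => ?_)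
  · exact mem_sigma.2 ⟨apply_mem_of_mem_perfectMatchings hσ hx,
      swap_apply_mul_mem_perfectMatchings hσ x⟩
  · rintro ⟨y, τ⟩ h
    obtain ⟨hy, hτ⟩ := mem_sigma.1 h
    exact swap_mul_mem_perfectMatchings hx hy hτ
  · simp only [Equiv.swap_mul_self_mul]
  · rintro ⟨y, τ⟩ h
    have hfix : τ x = x := fixed_of_mem_perfectMatchings (mem_sigma.1 h).2 (by simp)
    simp only [Equiv.Perm.mul_apply, hfix, Equiv.swap_apply_left, Equiv.swap_mul_self_mul]
  · simp only [Equiv.swap_mul_self_mul]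

lemma card_perfectMatchings (Y : Finset X) :
    #(perfectMatchings Y) = if Even #Y then (#Y - 1).doubleFactorial else 0 := by
  induction h : #Y using Nat.strong_induction_on generalizing Y with
  | _ k ih =>
    rcases Y.eq_empty_or_nonempty with rfl | ⟨x, hx⟩
    · simp [perfectMatchings_empty, ← h]
    have hrec : ∀ y ∈ Y.erase x, #(perfectMatchings ((Y.erase x).erase y)) =
        if Even (k - 2) then (k - 2 - 1).doubleFactorial else 0 := fun y hy => by
      have hpos : 0 < #(Y.erase x) := card_pos.2 ⟨y, hy⟩
      rw [card_erase_of_mem hx] at hpos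
      exact ih (k - 2) (by omega) _ (by rw [card_erase_of_mem hy, card_erase_of_mem hx]; omega)
    have hpos : 0 < #Y := card_pos.2 ⟨x, hx⟩
    rw [card_eq_sum_ones, sum_perfectMatchings hx]
    simp only [← card_eq_sum_ones]
    rw [sum_congr rfl hrec, sum_const, card_erase_of_mem hx, h, smul_eq_mul]
    match k with
    | 0 => omega
    | 1 => simp
    | 2 => simp
    | k + 3 => simp [Nat.doubleFactorial, parity_simps]

lemma card_perfectMatchings_erase_erase (hx : x ∈ Y) (hy : y ∈ Y.erase x) :
    #(perfectMatchings Y) = (#Y - 1) * #(perfectMatchings ((Y.erase x).erase y)) := by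
  have hcard : ∀ z ∈ Y.erase x, #(perfectMatchings ((Y.erase x).erase z)) =
      #(perfectMatchings ((Y.erase x).erase y)) := fun z hz => by
    simp only [card_perfectMatchings, card_erase_of_mem hz, card_erase_of_mem hy]
  rw [card_eq_sum_ones, sum_perfectMatchings hx]
  simp only [← card_eq_sum_ones]
  rw [sum_congr rfl hcard, sum_const, card_erase_of_mem hx, smul_eq_mul]

lemma card_perfectMatchings_univ_mul {k : ℕ} (hk : Fintype.card X = 2 * k) :
    #(perfectMatchings (univ : Finset X)) * (2 ^ k * k.factorial) = (2 * k).factorial := by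
  rw [card_perfectMatchings, card_univ, hk, if_pos (even_two_mul k),
    ← Nat.doubleFactorial_two_mul]
  cases k with
  | zero => rfl
  | succ k =>
    rw [Nat.mul_succ, Nat.factorial_eq_mul_doubleFactorial, mul_comm]
    rfl

lemma cast_card_perfectMatchings_univ {m : ℕ} (hX : Fintype.card X = m) (hm : Even m) :
    (#(perfectMatchings (univ : Finset X)) : ℝ) =
      m.factorial / (2 ^ (m / 2) * (m / 2).factorial) := by
  have hhalf := Nat.two_mul_div_two_of_even hm
  have hcard := card_perfectMatchings_univ_mul (hX.trans hhalf.symm)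
  rw [hhalf] at hcard
  rw [eq_div_iff (by positivity)]
  exact_mod_cast hcard

end Matchings

section Exposure

variable {X I : Type*} [DecidableEq X] {D Y : Finset X} {x y z : X} {σ : Equiv.Perm X}

/-- The points of `D` that `σ` matches with a point outside `D`. -/
def externalEnds (D : Finset X) (σ : Equiv.Perm X) : Finset X :=
  {x ∈ D | σ x ∉ D}

/-- The points of `D` that `σ` matches with another point of `D`. -/
def internalEnds (D : Finset X) (σ : Equiv.Perm X) : Finset X :=
  {x ∈ D | σ x ∈ D ∧ σ x ≠ x}

lemma card_internalEnds_add_card_externalEnds (hσ : ∀ x ∈ D, σ x ≠ x) :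
    #(internalEnds D σ) + #(externalEnds D σ) = #D := by
  rw [internalEnds, filter_congr (q := fun x => σ x ∈ D) fun x hx => and_iff_left (hσ x hx)]
  exact card_filter_add_card_filter_not _

lemma swap_mul_apply_of_moved (hx : σ x = x) (hy : σ y = y) (hz : σ z ≠ z) :
    (Equiv.swap x y * σ) z = σ z := by
  refine Equiv.swap_apply_of_ne_of_ne (fun h => hz ?_) (fun h => hz ?_)
  · rw [h, σ.injective (h.trans hx.symm)]
  · rw [h, σ.injective (h.trans hy.symm)]

lemma internalEnds_subset_swap_mul (hx : σ x = x) (hy : σ y = y) :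
    internalEnds D σ ⊆ internalEnds D (Equiv.swap x y * σ) := fun z hz => by
  simp only [internalEnds, mem_filter] at hz ⊢
  rwa [swap_mul_apply_of_moved hx hy hz.2.2]

lemma card_internalEnds_add_two_le (hxy : x ≠ y) (hx : σ x = x) (hy : σ y = y) (hxD : x ∈ D)
    (hyD : y ∈ D) : #(internalEnds D σ) + 2 ≤ #(internalEnds D (Equiv.swap x y * σ)) := by
  have hdisj : Disjoint (internalEnds D σ) {x, y} := by
    simp [internalEnds, hx, hy]
  rw [← card_pair hxy, ← card_union_of_disjoint hdisj]
  refine card_le_card (union_subset (internalEnds_subset_swap_mul hx hy) ?_)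
  have hσx : (Equiv.swap x y * σ) x = y := by simp [hx]
  have hσy : (Equiv.swap x y * σ) y = x := by simp [hy]
  refine insert_subset (mem_filter.2 ⟨hxD, ?_⟩) (singleton_subset_iff.2 (mem_filter.2 ⟨hyD, ?_⟩))
  · rw [hσx]
    exact ⟨hyD, hxy.symm⟩
  · rw [hσy]
    exact ⟨hxD, hxy⟩

variable [DecidableEq I] {π : X → I} {τ : Finset I}

/-- The labels outside `τ` of the partners of the external ends of `D`. -/
def freshTargets (π : X → I) (D : Finset X) (τ : Finset I) (σ : Equiv.Perm X) : Finset I :=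
  (externalEnds D σ).image (π ∘ σ) \ τ

/-- The weight driving the exposure argument: when the edges at `D` are revealed one at a time, each
of them adds `2` to it unless it leads out of `D` to a label that has already been seen. -/
def exposureWeight (π : X → I) (D : Finset X) (τ : Finset I) (σ : Equiv.Perm X) : ℕ :=
  2 * #(freshTargets π D τ σ) + #(internalEnds D σ)

lemma freshTargets_subset_swap_mul (hx : σ x = x) (hy : σ y = y) :
    freshTargets π D τ σ ⊆ freshTargets π D τ (Equiv.swap x y * σ) := by
  refine sdiff_subset_sdiff (fun k hk => ?_) Subset.rfl
  simp only [externalEnds, mem_image, mem_filter, Function.comp_apply] at hk ⊢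
  obtain ⟨z, ⟨hzD, hz⟩, rfl⟩ := hk
  have hσz : (Equiv.swap x y * σ) z = σ z :=
    swap_mul_apply_of_moved hx hy fun h => hz (h.symm ▸ hzD)
  exact ⟨z, ⟨hzD, hσz.symm ▸ hz⟩, by rw [hσz]⟩

lemma card_freshTargets_insert_lt (hx : σ x = x) (hy : σ y = y) (hxD : x ∈ D) (hyD : y ∉ D)
    (hyτ : π y ∉ τ) : #(freshTargets π D (insert (π y) τ) σ) + 1 ≤
      #(freshTargets π D τ (Equiv.swap x y * σ)) := by
  rw [freshTargets, sdiff_insert, ← freshTargets,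
    ← card_insert_of_notMem (notMem_erase (π y) (freshTargets π D τ σ))]
  refine card_le_card (insert_subset ?_ ((erase_subset _ _).trans
    (freshTargets_subset_swap_mul hx hy)))
  have hσx : (Equiv.swap x y * σ) x = y := by simp [hx]
  refine mem_sdiff.2 ⟨mem_image.2 ⟨x, mem_filter.2 ⟨hxD, ?_⟩, ?_⟩, hyτ⟩
  · rwa [hσx]
  · rw [Function.comp_apply, hσx]

lemma exposureWeight_le_swap_mul (hx : σ x = x) (hy : σ y = y) :
    exposureWeight π D τ σ ≤ exposureWeight π D τ (Equiv.swap x y * σ) :=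
  add_le_add (Nat.mul_le_mul_left 2 (card_le_card (freshTargets_subset_swap_mul hx hy)))
    (card_le_card (internalEnds_subset_swap_mul hx hy))

lemma exposureWeight_add_two_le_of_mem (hxy : x ≠ y) (hx : σ x = x) (hy : σ y = y) (hxD : x ∈ D)
    (hyD : y ∈ D) :
    exposureWeight π D τ σ + 2 ≤ exposureWeight π D τ (Equiv.swap x y * σ) := by
  have hfresh := card_le_card (freshTargets_subset_swap_mul (π := π) (D := D) (τ := τ) hx hy)
  have hint := card_internalEnds_add_two_le hxy hx hy hxD hyD
  unfold exposureWeight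
  omega

lemma exposureWeight_add_two_le_of_notMem (hx : σ x = x) (hy : σ y = y) (hxD : x ∈ D)
    (hyD : y ∉ D) (hyτ : π y ∉ τ) :
    exposureWeight π D (insert (π y) τ) σ + 2 ≤ exposureWeight π D τ (Equiv.swap x y * σ) := by
  have hfresh := card_freshTargets_insert_lt hx hy hxD hyD hyτ
  have hint := card_le_card (internalEnds_subset_swap_mul (D := D) hx hy)
  unfold exposureWeight
  omega

lemma sum_pow_le_pow_mul_sum_pow {α : Type*} {s : Finset α} {w w' : α → ℕ} {κ : ℝ} {j : ℕ}
    (hκ₀ : 0 ≤ κ) (hκ₁ : κ ≤ 1) (h : ∀ a ∈ s, w a + j ≤ w' a) :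
    ∑ a ∈ s, κ ^ w' a ≤ κ ^ j * ∑ a ∈ s, κ ^ w a := by
  rw [mul_sum]
  refine sum_le_sum fun a ha => ?_
  rw [← pow_add, add_comm]
  exact pow_le_pow_of_le_one hκ₀ hκ₁ (h a ha)

variable [Fintype X] {d L b k : ℕ} {κ : ℝ}

lemma card_filter_mem_or_label_mem_le (hπ : ∀ i, #{x | π x = i} ≤ d) :
    #{y ∈ Y.erase x | y ∈ D ∨ π y ∈ τ} ≤ d * (#τ + #((D ∩ Y).erase x)) := by
  have hd : 1 ≤ d := (card_pos.2 ⟨x, by simp⟩).trans_le (hπ (π x))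
  have hlabel : #{y | π y ∈ τ} ≤ #τ * d :=
    (card_le_mul_card_image_of_maps_to (f := π) (fun y hy => (mem_filter.1 hy).2) d
      fun i _ => (card_le_card fun y hy => mem_filter.2 ⟨mem_univ y, (mem_filter.1 hy).2⟩).trans
        (hπ i)).trans (mul_comm _ _).le
  calc #{y ∈ Y.erase x | y ∈ D ∨ π y ∈ τ}
      ≤ #((D ∩ Y).erase x ∪ ({y | π y ∈ τ} : Finset X)) := card_le_card fun y hy => by
        simp only [mem_filter, mem_erase, mem_union, mem_inter, mem_univ, true_and] at hy ⊢
        tauto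
    _ ≤ 1 * #((D ∩ Y).erase x) + #τ * d := by
        rw [one_mul]
        exact (card_union_le _ _).trans (Nat.add_le_add_left hlabel _)
    _ ≤ d * (#τ + #((D ∩ Y).erase x)) := by
        linarith [Nat.mul_le_mul_right #((D ∩ Y).erase x) hd]

lemma sum_pow_exposureWeight_swap_mul_le (hκ₀ : 0 ≤ κ) (hκ₁ : κ ≤ 1) (hx : x ∈ D ∩ Y)
    (hy : y ∈ Y.erase x) (hk : #(D ∩ Y) = k + 1) (hτ : #τ + (k + 1) ≤ L)
    (ih : ∀ τ' : Finset I, #τ' + #(D ∩ (Y.erase x).erase y) ≤ L →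
      ∑ σ ∈ perfectMatchings ((Y.erase x).erase y), κ ^ exposureWeight π D τ' σ ≤
        #(perfectMatchings ((Y.erase x).erase y)) *
          (2 * κ ^ 2) ^ #(D ∩ (Y.erase x).erase y)) :
    ∑ σ ∈ perfectMatchings ((Y.erase x).erase y),
        κ ^ exposureWeight π D τ (Equiv.swap x y * σ) ≤
      #(perfectMatchings ((Y.erase x).erase y)) * (2 * κ ^ 2) ^ k *
        if y ∈ D ∨ π y ∈ τ then 1 else κ ^ 2 := by
  have hfix : ∀ σ ∈ perfectMatchings ((Y.erase x).erase y), σ x = x ∧ σ y = y := fun σ hσ =>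
    ⟨fixed_of_mem_perfectMatchings hσ (by simp), fixed_of_mem_perfectMatchings hσ (by simp)⟩
  obtain ⟨hyx, -⟩ := mem_erase.1 hy
  have hxD : x ∈ D := mem_of_mem_inter_left hx
  have hcard : #(D ∩ (Y.erase x).erase y) = if y ∈ D then k - 1 else k := by
    rw [inter_erase, inter_erase, card_erase_eq_ite, card_erase_of_mem hx, hk]
    simp [hyx, (mem_erase.1 hy).2]
  by_cases hyD : y ∈ D
  · have hk₁ : k - 1 + 1 = k := by
      have : 0 < #((D ∩ Y).erase x) :=
        card_pos.2 ⟨y, mem_erase.2 ⟨hyx, mem_inter.2 ⟨hyD, (mem_erase.1 hy).2⟩⟩⟩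
      rw [card_erase_of_mem hx] at this
      omega
    rw [if_pos hyD] at hcard
    rw [if_pos (.inl hyD), mul_one]
    refine (sum_pow_le_pow_mul_sum_pow hκ₀ hκ₁ fun σ hσ => exposureWeight_add_two_le_of_mem hyx.symm
      (hfix σ hσ).1 (hfix σ hσ).2 hxD hyD).trans ?_
    have h := mul_le_mul_of_nonneg_left (ih τ (by omega)) (sq_nonneg κ)
    rw [hcard] at h
    refine h.trans ?_
    rw [mul_left_comm, ← pow_sub_one_mul (n := k) (by omega), mul_comm (κ ^ 2)]
    gcongr
    linarith [sq_nonneg κ]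
  rw [if_neg hyD] at hcard
  rw [hcard] at ih
  by_cases hyτ : π y ∈ τ
  · rw [if_pos (.inr hyτ), mul_one]
    refine le_trans (sum_le_sum fun σ hσ => pow_le_pow_of_le_one hκ₀ hκ₁
      (exposureWeight_le_swap_mul (hfix σ hσ).1 (hfix σ hσ).2)) (ih τ (by omega))
  · rw [if_neg (by tauto), mul_comm _ (κ ^ 2)]
    refine (sum_pow_le_pow_mul_sum_pow hκ₀ hκ₁ fun σ hσ => exposureWeight_add_two_le_of_notMem
      (hfix σ hσ).1 (hfix σ hσ).2 hxD hyD hyτ).trans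
      (mul_le_mul_of_nonneg_left (ih _ ?_) (sq_nonneg κ))
    rw [card_insert_of_notMem hyτ]
    omega

lemma sum_pow_exposureWeight_le (hκ₀ : 0 ≤ κ) (hκ₁ : κ ≤ 1) (hπ : ∀ i, #{x | π x = i} ≤ d)
    (hL : (d * L : ℝ) ≤ κ ^ 2 * b) (hτ : #τ + #(D ∩ Y) ≤ L) (hY : 2 * #(D ∩ Y) + b ≤ #Y) :
    ∑ σ ∈ perfectMatchings Y, κ ^ exposureWeight π D τ σ ≤
      #(perfectMatchings Y) * (2 * κ ^ 2) ^ #(D ∩ Y) := by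
  induction hk : #(D ∩ Y) using Nat.strong_induction_on generalizing Y τ with
  | _ k ih =>
  rcases k with _ | k
  · refine (sum_le_sum fun σ _ => pow_le_one₀ hκ₀ hκ₁).trans ?_
    simp
  obtain ⟨x, hx⟩ : (D ∩ Y).Nonempty := card_pos.1 (by omega)
  have hxY : x ∈ Y := mem_of_mem_inter_right hx
  have hcard : (#(Y.erase x) : ℝ) = (#Y - 1 : ℕ) := by rw [card_erase_of_mem hxY]
  have hbad : (#{y ∈ Y.erase x | y ∈ D ∨ π y ∈ τ} : ℝ) ≤ κ ^ 2 * #(Y.erase x) :=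
    calc (#{y ∈ Y.erase x | y ∈ D ∨ π y ∈ τ} : ℝ)
        ≤ (d * L : ℕ) := mod_cast (card_filter_mem_or_label_mem_le hπ).trans <|
          Nat.mul_le_mul_left d (show #τ + #((D ∩ Y).erase x) ≤ L by
            rw [card_erase_of_mem hx]; omega)
      _ ≤ κ ^ 2 * b := by rwa [Nat.cast_mul]
      _ ≤ κ ^ 2 * #(Y.erase x) := by rw [hcard]; gcongr; omega
  obtain ⟨m, hm⟩ : ∃ m, ∀ y ∈ Y.erase x, #(perfectMatchings ((Y.erase x).erase y)) = m :=
    ⟨_, fun y hy => by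
      rw [card_perfectMatchings, card_erase_of_mem hy, card_erase_of_mem hxY]⟩
  have hM : (#(perfectMatchings Y) : ℝ) = #(Y.erase x) * m := by
    obtain ⟨y, hy⟩ : (Y.erase x).Nonempty := card_pos.1 (by rw [card_erase_of_mem hxY]; omega)
    rw [card_perfectMatchings_erase_erase hxY hy, hm y hy, hcard, Nat.cast_mul]
  rw [sum_perfectMatchings hxY]
  calc ∑ y ∈ Y.erase x, ∑ σ ∈ perfectMatchings ((Y.erase x).erase y),
        κ ^ exposureWeight π D τ (Equiv.swap x y * σ)
      ≤ ∑ y ∈ Y.erase x, m * (2 * κ ^ 2) ^ k * if y ∈ D ∨ π y ∈ τ then 1 else κ ^ 2 :=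
        sum_le_sum fun y hy => by
          rw [← hm y hy]
          refine sum_pow_exposureWeight_swap_mul_le (L := L) hκ₀ hκ₁ hx hy hk (by omega)
            fun τ' hτ' => ?_
          have hlt : #(D ∩ (Y.erase x).erase y) < k + 1 := hk ▸ card_lt_card
            (ssubset_iff_of_subset (inter_subset_inter_left ((erase_subset _ _).trans
              (erase_subset _ _))) |>.2 ⟨x, hx, by simp⟩)
          refine ih _ hlt hτ' ?_ rfl
          rw [card_erase_of_mem hy, card_erase_of_mem hxY]
          omega
    _ ≤ ∑ y ∈ Y.erase x, m * (2 * κ ^ 2) ^ k * ((if y ∈ D ∨ π y ∈ τ then 1 else 0) + κ ^ 2) := by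
        gcongr
        split_ifs <;> simp [sq_nonneg]
    _ ≤ m * (2 * κ ^ 2) ^ k * (2 * κ ^ 2 * #(Y.erase x)) := by
        rw [← mul_sum, sum_add_distrib, sum_boole, sum_const, nsmul_eq_mul]
        gcongr
        linarith
    _ = #(perfectMatchings Y) * (2 * κ ^ 2) ^ (k + 1) := by rw [hM]; ring

lemma card_filter_two_mul_freshTargets_le (hκ₀ : 0 < κ) (hκ₁ : κ ≤ 1)
    (hπ : ∀ i, #{x | π x = i} ≤ d) (hD : (d * #D : ℝ) ≤ κ ^ 2 * b)
    (hb : 2 * #D + b ≤ Fintype.card X) :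
    (#{σ ∈ perfectMatchings (univ : Finset X) |
        2 * #(freshTargets π D ∅ σ) ≤ #(externalEnds D σ)} : ℝ) ≤
      #(perfectMatchings (univ : Finset X)) * (2 * κ) ^ #D := by
  have hweight : ∀ σ ∈ ({σ ∈ perfectMatchings (univ : Finset X) |
      2 * #(freshTargets π D ∅ σ) ≤ #(externalEnds D σ)} : Finset (Equiv.Perm X)),
      κ ^ #D ≤ κ ^ exposureWeight π D ∅ σ := fun σ hσ => by
    obtain ⟨hσM, hfresh⟩ := mem_filter.1 hσ
    refine pow_le_pow_of_le_one hκ₀.le hκ₁ ?_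
    rw [← card_internalEnds_add_card_externalEnds
      fun x _ => (mem_perfectMatchings_univ.1 hσM).2 x, exposureWeight]
    omega
  have hmoment : _ ≤ _ * (2 * κ ^ 2) ^ #(D ∩ univ) :=
    sum_pow_exposureWeight_le (τ := ∅) hκ₀.le hκ₁ hπ hD (by simp) (by simpa using hb)
  refine le_of_mul_le_mul_right ?_ (pow_pos hκ₀ #D)
  calc _ ≤ ∑ σ ∈ perfectMatchings univ with
        2 * #(freshTargets π D ∅ σ) ≤ #(externalEnds D σ), κ ^ exposureWeight π D ∅ σ := by
        rw [← nsmul_eq_mul]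
        exact card_nsmul_le_sum _ _ _ hweight
    _ ≤ ∑ σ ∈ perfectMatchings univ, κ ^ exposureWeight π D ∅ σ :=
        sum_le_sum_of_subset_of_nonneg (filter_subset _ _) fun σ _ _ => pow_nonneg hκ₀.le _
    _ ≤ #(perfectMatchings univ) * (2 * κ ^ 2) ^ #D := by rwa [inter_univ] at hmoment
    _ = #(perfectMatchings univ) * (2 * κ) ^ #D * κ ^ #D := by
        rw [mul_assoc, ← mul_pow]; ring

end Exposure

section KernelMatchings

variable {n d : ℕ} {R : Type*} [Ring R]

lemma adjMat_map_mulVec_apply (σ : Equiv.Perm (Fin n × Fin d)) (v : Fin n → R) (k : Fin n) :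
    ((adjMat n d σ).map (Int.cast : ℤ → R)).mulVec v k = ∑ i, v (σ (k, i)).1 := by
  simp only [Matrix.mulVec, dotProduct, adjMat, Matrix.map_apply, Int.cast_natCast]
  simp only [natCast_card_filter, sum_mul, ite_mul, one_mul, zero_mul]
  rw [sum_comm]
  exact sum_congr rfl fun i _ => by rw [sum_ite_eq, if_pos (mem_univ _)]

variable [DecidableEq R]

/-- The perfect matchings of `[n] × [d]` whose adjacency matrix annihilates `v`. -/
def kernelMatchings (d : ℕ) (v : Fin n → R) : Finset (Equiv.Perm (Fin n × Fin d)) :=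
  {σ ∈ perfectMatchings univ | ((adjMat n d σ).map (Int.cast : ℤ → R)).mulVec v = 0}

/-- The half-edges at the vertices where `v` does not vanish. -/
def supportEnds (d : ℕ) (v : Fin n → R) : Finset (Fin n × Fin d) :=
  {x | v x.1 ≠ 0}

variable {v : Fin n → R} {σ : Equiv.Perm (Fin n × Fin d)}

lemma mem_kernelMatchings : σ ∈ kernelMatchings d v ↔
    σ ∈ perfectMatchings univ ∧ ∀ k, ∑ i, v (σ (k, i)).1 = 0 := by
  simp only [kernelMatchings, mem_filter, funext_iff, adjMat_map_mulVec_apply, Pi.zero_apply]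

lemma card_kernelMatchings_le_card_perfectMatchings :
    #(kernelMatchings d v) ≤ #(perfectMatchings (univ : Finset (Fin n × Fin d))) :=
  card_filter_le _ _

lemma mem_supportEnds {x : Fin n × Fin d} : x ∈ supportEnds d v ↔ v x.1 ≠ 0 := by
  simp only [supportEnds, mem_filter_univ]

lemma card_supportEnds : #(supportEnds d v) = hammingNorm v * d := by
  have h : supportEnds d v = ({k | v k ≠ 0} : Finset (Fin n)) ×ˢ univ := by
    ext x
    simp [mem_supportEnds]
  rw [h, card_product, card_fin, hammingNorm]

lemma card_filter_fst_eq (k : Fin n) : #{x : Fin n × Fin d | x.1 = k} = d := by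
  rw [show ({x : Fin n × Fin d | x.1 = k} : Finset _) = {k} ×ˢ univ by ext ⟨a, b⟩; simp [eq_comm]]
  simp

-- A vertex next to exactly one half-edge of the support would have a nonzero entry in `A(σ) v`.
lemma two_mul_card_freshTargets_le (hσ : σ ∈ kernelMatchings d v) :
    2 * #(freshTargets Prod.fst (supportEnds d v) ∅ σ) ≤ #(externalEnds (supportEnds d v) σ) := by
  obtain ⟨hσM, hker⟩ := mem_kernelMatchings.1 hσ
  obtain ⟨hinv, -⟩ := mem_perfectMatchings_univ.1 hσM
  rw [freshTargets, sdiff_empty]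
  refine mul_card_image_le_card_of_maps_to (f := Prod.fst ∘ σ)
    (fun x hx => mem_image_of_mem _ hx) 2 fun k hk => ?_
  obtain ⟨x, hx, rfl⟩ := mem_image.1 hk
  have hmem : ∀ z, z ∈ externalEnds (supportEnds d v) σ ↔ v z.1 ≠ 0 ∧ v (σ z).1 = 0 := by
    simp [externalEnds, mem_supportEnds]
  obtain ⟨hx₁, hx₂⟩ := (hmem x).1 hx
  obtain ⟨j, hj, hvj⟩ : ∃ j ≠ (σ x).2, v (σ ((σ x).1, j)).1 ≠ 0 := by
    by_contra! h
    have hrow := hker (σ x).1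
    rw [sum_eq_single (σ x).2 (fun j _ hj => h j hj) (by simp), Prod.mk.eta, hinv] at hrow
    exact hx₁ hrow
  refine one_lt_card.2 ⟨x, by simpa using hx, σ ((σ x).1, j), ?_, fun h => hj ?_⟩
  · simp only [mem_filter, hmem, hinv, Function.comp_apply]
    exact ⟨⟨hvj, hx₂⟩, trivial⟩
  · rw [congrArg σ h, hinv]

lemma card_kernelMatchings_le (hd : 0 < d) (hv : v ≠ 0) (hn : 4 * (hammingNorm v * d) ≤ n) :
    (#(kernelMatchings d v) : ℝ) ≤ #(perfectMatchings (univ : Finset (Fin n × Fin d))) *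
      (2 * √(2 * hammingNorm v * d / n)) ^ (hammingNorm v * d) := by
  have hs : 0 < hammingNorm v := hammingNorm_pos_iff.2 hv
  have hsd : 0 < hammingNorm v * d := Nat.mul_pos hs hd
  have hn₀ : (0 : ℝ) < n := mod_cast (by omega : 0 < n)
  have hnR : 4 * (hammingNorm v * d : ℝ) ≤ n := mod_cast hn
  have hκ : 0 < 2 * (hammingNorm v : ℝ) * d / n := by positivity
  have hsn : 4 * hammingNorm v ≤ n := by nlinarith
  have hb : 2 * (hammingNorm v * d) ≤ n * d := by nlinarith
  rw [← card_supportEnds]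
  refine le_trans (mod_cast card_le_card fun σ hσ => mem_filter.2
    ⟨(mem_kernelMatchings.1 hσ).1, two_mul_card_freshTargets_le hσ⟩)
    (card_filter_two_mul_freshTargets_le (d := d) (b := n * d - 2 * (hammingNorm v * d))
      (Real.sqrt_pos.2 hκ) ?_ (fun k => (card_filter_fst_eq k).le) ?_ ?_)
  · rw [Real.sqrt_le_one, div_le_one hn₀]
    linarith
  · rw [Real.sq_sqrt hκ.le, card_supportEnds, Nat.cast_sub hb, div_mul_eq_mul_div, le_div_iff₀ hn₀]
    have hsn' : 4 * (hammingNorm v : ℝ) ≤ n := mod_cast hsn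
    have hfac : (0 : ℝ) ≤ hammingNorm v * d * d := by positivity
    push_cast
    nlinarith
  · rw [card_supportEnds, Fintype.card_prod, Fintype.card_fin, Fintype.card_fin]
    omega

-- Few half-edges lead to a vertex where `v ≠ a`, so some row of `A(σ) v` sums to `d a`.
lemma kernelMatchings_eq_empty_of_hammingDist_lt [NoZeroDivisors R] {a : R}
    (hd : (d : R) ≠ 0) (ha : a ≠ 0) (hv : hammingDist v (fun _ => a) * d < n) :
    kernelMatchings d v = ∅ := by
  refine eq_empty_of_forall_notMem fun σ hσ => ?_
  obtain ⟨hσM, hker⟩ := mem_kernelMatchings.1 hσ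
  have hcard : #((({k | v k ≠ a} : Finset _) ×ˢ univ).image fun x => (σ x).1) <
      #(univ : Finset (Fin n)) := by
    refine card_image_le.trans_lt ?_
    rwa [card_product, card_fin, card_fin]
  obtain ⟨k, -, hk⟩ := exists_mem_notMem_of_card_lt_card hcard
  have hrow : ∀ i, v (σ (k, i)).1 = a := fun i => by
    by_contra hne
    refine hk (mem_image.2 ⟨σ (k, i), by simpa using hne, ?_⟩)
    rw [(mem_perfectMatchings_univ.1 hσM).1]
  have hsum := hker k
  simp only [hrow, sum_const, card_fin, nsmul_eq_mul] at hsum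
  exact mul_ne_zero hd ha hsum

end KernelMatchings

section NearConstant

variable {ι R : Type*} [Fintype ι] [DecidableEq ι] [Fintype R] [DecidableEq R]

lemma sum_pow_hammingDist (x : ℝ) (w : ι → R) :
    ∑ v : ι → R, x ^ hammingDist v w = (1 + (Fintype.card R - 1) * x) ^ Fintype.card ι := by
  have hprod : ∀ v : ι → R, x ^ hammingDist v w = ∏ k, if v k = w k then 1 else x := fun v => by
    rw [prod_ite, prod_const_one, one_mul, prod_const, hammingDist]
  have hcoord : ∀ k, ∑ b, (if b = w k then 1 else x) = 1 + (Fintype.card R - 1) * x := fun k => by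
    rw [← add_sum_erase _ _ (mem_univ (w k)), if_pos rfl,
      sum_congr rfl fun b hb => if_neg (ne_of_mem_erase hb), sum_const,
      card_erase_of_mem (mem_univ _), card_univ, nsmul_eq_mul,
      Nat.cast_pred (Fintype.card_pos_iff.2 ⟨w k⟩)]
  simp only [hprod]
  rw [← Fintype.prod_sum fun k b => if b = w k then 1 else x]
  simp only [hcoord, prod_const, card_univ]

-- Chernoff's bound at the parameter `1 / (4q)`, where `q = |R|`.
lemma card_filter_hammingDist_le {δ : ℝ} (hδ : 20 * Fintype.card R * δ ≤ 1) (w : ι → R) :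
    (#{v | hammingDist v w ≤ δ * Fintype.card ι} : ℝ) ≤ (25 / 16) ^ Fintype.card ι := by
  rcases isEmpty_or_nonempty ι with hι | ⟨⟨k⟩⟩
  · simpa using card_le_one_of_subsingleton _
  set q : ℝ := (Fintype.card R : ℝ)
  have hq₁ : 1 ≤ q := Nat.one_le_cast.2 (Fintype.card_pos_iff.2 ⟨w k⟩)
  have htilt : (4 * q) ^ δ ≤ 5 / 4 :=
    calc (4 * q) ^ δ = Real.exp (Real.log (4 * q) * δ) := Real.rpow_def_of_pos (by positivity) δ
      _ ≤ Real.exp (1 / 5) := by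
          gcongr
          rcases le_total δ 0 with hδ₀ | hδ₀
          · nlinarith [Real.log_nonneg (by linarith : 1 ≤ 4 * q)]
          · nlinarith [Real.log_le_self (by positivity : 0 ≤ 4 * q)]
      _ ≤ 5 / 4 := by
          have := Real.one_sub_le_exp_neg (1 / 5)
          rw [Real.exp_neg, le_inv_comm₀ (by norm_num) (Real.exp_pos _)] at this
          linarith
  calc (#{v | hammingDist v w ≤ δ * Fintype.card ι} : ℝ)
      ≤ ∑ v with hammingDist v w ≤ δ * Fintype.card ι,
          (5 / 4) ^ Fintype.card ι * (1 / (4 * q)) ^ hammingDist v w := by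
        rw [card_eq_sum_ones, Nat.cast_sum]
        refine sum_le_sum fun v hv => ?_
        rw [one_div, inv_pow, ← div_eq_mul_inv, Nat.cast_one, one_le_div₀ (by positivity),
          ← Real.rpow_natCast]
        calc (4 * q) ^ (hammingDist v w : ℝ) ≤ (4 * q) ^ (δ * Fintype.card ι) :=
              Real.rpow_le_rpow_of_exponent_le (by linarith) (mem_filter.1 hv).2
          _ = ((4 * q) ^ δ) ^ Fintype.card ι := by
              rw [Real.rpow_mul (by positivity), Real.rpow_natCast]
          _ ≤ _ := by gcongr
    _ ≤ ∑ v, (5 / 4) ^ Fintype.card ι * (1 / (4 * q)) ^ hammingDist v w :=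
        sum_le_sum_of_subset_of_nonneg (filter_subset _ _) fun v _ _ => by positivity
    _ = (5 / 4 * (1 + (q - 1) * (1 / (4 * q)))) ^ Fintype.card ι := by
        rw [← mul_sum, sum_pow_hammingDist, mul_pow]
    _ ≤ (25 / 16) ^ Fintype.card ι := by
        have : (q - 1) * (1 / (4 * q)) = 1 / 4 - 1 / (4 * q) := by field_simp
        have hpos : 0 < 1 / (4 * q) := by positivity
        have hle : 1 / (4 * q) ≤ 1 := by rw [div_le_one (by positivity)]; linarith
        refine pow_le_pow_left₀ (by linarith) (by linarith) _

/-- The vectors that agree with a constant vector outside at most `δ n` coordinates. -/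
noncomputable def nearConstant (R : Type*) [DecidableEq R] [Fintype R] (n : ℕ) (δ : ℝ) :
    Finset (Fin n → R) :=
  {v | ∃ a, hammingDist v (fun _ => a) ≤ δ * n}

lemma card_nearConstant_le {n : ℕ} {δ : ℝ} (hδ : 20 * Fintype.card R * δ ≤ 1) :
    (#(nearConstant R n δ) : ℝ) ≤ Fintype.card R * (25 / 16) ^ n := by
  have hunion : nearConstant R n δ =
      univ.biUnion fun a : R => {v | hammingDist v (fun _ => a) ≤ δ * n} := by
    ext v
    simp [nearConstant]
  calc (#(nearConstant R n δ) : ℝ)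
      ≤ ∑ a : R, (#{v : Fin n → R | hammingDist v (fun _ => a) ≤ δ * n} : ℝ) := by
        rw [hunion]
        exact_mod_cast card_biUnion_le
    _ ≤ ∑ _a : R, (25 / 16 : ℝ) ^ n := sum_le_sum fun a _ => by
        simpa using card_filter_hammingDist_le hδ fun _ : Fin n => a
    _ = _ := by rw [sum_const, card_univ, nsmul_eq_mul]

end NearConstant

section NearRegion

lemma choose_le_three_mul_div_pow (n : ℕ) {s : ℕ} (hs : s ≠ 0) :
    (n.choose s : ℝ) ≤ (3 * n / s) ^ s := by
  have hexp : (s : ℝ) ^ s / s.factorial ≤ 3 ^ s :=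
    calc (s : ℝ) ^ s / s.factorial ≤ Real.exp s := Real.pow_div_factorial_le_exp s (by positivity) s
      _ = Real.exp 1 ^ s := (Real.exp_one_pow s).symm
      _ ≤ 3 ^ s := by gcongr; exact Real.exp_one_lt_three.le
  calc (n.choose s : ℝ) ≤ (n : ℝ) ^ s / s.factorial := Nat.choose_le_pow_div s n
    _ = (n / s : ℝ) ^ s * (s ^ s / s.factorial) := by
        rw [div_pow, div_mul_div_cancel₀ (by positivity)]
    _ ≤ (n / s : ℝ) ^ s * 3 ^ s := by gcongr
    _ = (3 * n / s) ^ s := by rw [← mul_pow]; ring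

lemma sum_mul_half_pow_le_two (t : Finset ℕ) : ∑ s ∈ t, (s : ℝ) * (1 / 2) ^ s ≤ 2 := by
  have hr : ‖(1 / 2 : ℝ)‖ < 1 := by norm_num
  calc ∑ s ∈ t, (s : ℝ) * (1 / 2) ^ s ≤ ∑' s : ℕ, (s : ℝ) * (1 / 2) ^ s :=
        (hasSum_coe_mul_geometric_of_norm_lt_one hr).summable.sum_le_tsum t
          fun s _ => by positivity
    _ = 2 := by rw [tsum_coe_mul_geometric_of_norm_lt_one hr]; norm_num

variable {n d : ℕ} {R : Type*} [Ring R] [DecidableEq R] [Fintype R] {δ : ℝ}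

lemma card_filter_hammingNorm_eq_le (s : ℕ) :
    #{v : Fin n → R | hammingNorm v = s} ≤ n.choose s * Fintype.card R ^ s := by
  have hfiber : ∀ V ∈ powersetCard s (univ : Finset (Fin n)),
      #{v ∈ ({v : Fin n → R | hammingNorm v = s} : Finset _) | ({k | v k ≠ 0} : Finset _) = V} ≤
        Fintype.card R ^ s := fun V hV => by
    calc _ ≤ #(Fintype.piFinset fun k => if k ∈ V then (univ : Finset R) else {0}) := by
          refine card_le_card fun v hv => Fintype.mem_piFinset.2 fun k => ?_
          obtain rfl := (mem_filter.1 hv).2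
          split_ifs with hk
          · exact mem_univ _
          · exact mem_singleton.2 (by simpa using hk)
      _ = Fintype.card R ^ s := by
          rw [Fintype.card_piFinset, ← (mem_powersetCard.1 hV).2]
          simp only [apply_ite card, card_univ, card_singleton, prod_ite_mem, univ_inter,
            prod_const]
  refine (card_le_mul_card_image_of_maps_to (fun v hv => ?_) _ hfiber).trans_eq ?_
  · exact mem_powersetCard.2 ⟨subset_univ _, (mem_filter.1 hv).2⟩
  · rw [card_powersetCard, card_fin, mul_comm]

/-- The rate `K` such that the vectors with `s` nonzero entries contribute at most
`(K √(2sd/n))^s` to the expected number of kernel vectors, `q` being the size of the ring. -/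
def nearRate (q d : ℕ) : ℝ := 48 * d * q

lemma sum_card_kernelMatchings_hammingNorm_eq_le (hd : 3 ≤ d) {s : ℕ} (hs : s ≠ 0)
    (hn : 16 * (s * d) ≤ n) :
    ∑ v : Fin n → R with hammingNorm v = s, (#(kernelMatchings d v) : ℝ) ≤
      #(perfectMatchings (univ : Finset (Fin n × Fin d))) *
        (nearRate (Fintype.card R) d * √(2 * s * d / n)) ^ s := by
  have hsd : 0 < s * d := Nat.mul_pos (by omega) (by omega)
  have hn₀ : (0 : ℝ) < n := mod_cast (by omega : 0 < n)
  have hκ : 2 * √(2 * s * d / n) ≤ 1 := by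
    have hnR : 16 * (s * d : ℝ) ≤ n := mod_cast hn
    have : √(2 * s * d / n : ℝ) ≤ 1 / 2 := by
      rw [Real.sqrt_le_left (by norm_num), div_le_iff₀ hn₀]
      linarith
    linarith
  calc ∑ v : Fin n → R with hammingNorm v = s, (#(kernelMatchings d v) : ℝ)
      ≤ ∑ v : Fin n → R with hammingNorm v = s,
          (#(perfectMatchings (univ : Finset (Fin n × Fin d))) *
            (2 * √(2 * s * d / n)) ^ (s * 3) : ℝ) := sum_le_sum fun v hv => by
        obtain rfl := (mem_filter.1 hv).2
        refine (card_kernelMatchings_le (by omega) (hammingNorm_ne_zero_iff.1 hs)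
          (by omega)).trans ?_
        gcongr ?_ * ?_
        exact pow_le_pow_of_le_one (by positivity) hκ (Nat.mul_le_mul_left _ hd)
    _ ≤ ((3 * n / s) ^ s * Fintype.card R ^ s) *
          (#(perfectMatchings (univ : Finset (Fin n × Fin d))) *
            (2 * √(2 * s * d / n)) ^ (s * 3)) := by
        rw [sum_const, nsmul_eq_mul]
        gcongr
        calc (#{v : Fin n → R | hammingNorm v = s} : ℝ)
            ≤ n.choose s * Fintype.card R ^ s := mod_cast card_filter_hammingNorm_eq_le s
          _ ≤ _ := by gcongr; exact choose_le_three_mul_div_pow n hs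
    _ = _ := by
        have hκ₂ : √(2 * s * d / n : ℝ) ^ 2 * (n / s) = 2 * d := by
          rw [Real.sq_sqrt (by positivity)]
          field_simp
        rw [mul_left_comm, mul_comm s 3, pow_mul, ← mul_pow, ← mul_pow, nearRate]
        congr 2
        linear_combination 24 * (Fintype.card R : ℝ) * √(2 * s * d / n) * hκ₂

lemma nearRate_mul_sqrt_pow_le {q s : ℕ} (hs : s ≠ 0)
    (hn : 8 * d * nearRate q d ^ 2 * s ≤ n) :
    (nearRate q d * √(2 * s * d / n)) ^ s ≤
      2 * nearRate q d * √(2 * d / n) * (s * (1 / 2) ^ s) := by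
  have hK : 0 ≤ nearRate q d := by unfold nearRate; positivity
  have hbase : nearRate q d * √(2 * s * d / n) ≤ 1 / 2 := by
    refine abs_le_of_sq_le_sq' ?_ (by norm_num) |>.2
    rw [mul_pow, Real.sq_sqrt (by positivity), ← mul_div_assoc]
    refine div_le_of_le_mul₀ (by positivity) (by norm_num) ?_
    linarith
  have hsqrt : √(2 * s * d / n : ℝ) ≤ √(2 * d / n) * s := by
    have hs₁ : (1 : ℝ) ≤ s := mod_cast Nat.one_le_iff_ne_zero.2 hs
    rw [show (2 * s * d / n : ℝ) = 2 * d / n * s by ring, Real.sqrt_mul (by positivity)]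
    gcongr
    exact Real.sqrt_le_iff.2 ⟨by positivity, by nlinarith⟩
  rw [← pow_sub_one_mul hs]
  calc (nearRate q d * √(2 * s * d / n)) ^ (s - 1) * (nearRate q d * √(2 * s * d / n))
      ≤ (1 / 2) ^ (s - 1) * (nearRate q d * (√(2 * d / n) * s)) := by gcongr
    _ = 2 * nearRate q d * √(2 * d / n) * (s * ((1 / 2) ^ (s - 1) * (1 / 2))) := by ring
    _ = _ := by rw [pow_sub_one_mul hs]

lemma sum_card_kernelMatchings_ne_zero_le [Nontrivial R] (hd : 3 ≤ d)
    (hδ : δ * (8 * d * nearRate (Fintype.card R) d ^ 2) ≤ 1) :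
    ∑ v : Fin n → R with v ≠ 0 ∧ hammingNorm v ≤ δ * n, (#(kernelMatchings d v) : ℝ) ≤
      #(perfectMatchings (univ : Finset (Fin n × Fin d))) *
        (4 * nearRate (Fintype.card R) d * √(2 * d / n)) := by
  set K := nearRate (Fintype.card R) d with hK
  have hK₂ : (2 : ℝ) ≤ K ^ 2 := by
    have hdR : (3 : ℝ) ≤ d := mod_cast hd
    have hq : (1 : ℝ) ≤ Fintype.card R := mod_cast Fintype.card_pos
    have : (3 : ℝ) ≤ d * Fintype.card R := by nlinarith
    rw [hK, nearRate]
    nlinarith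
  have hsmall : ∀ s ∈ (Icc 1 n).filter (fun s : ℕ => (s : ℝ) ≤ δ * n), 8 * d * K ^ 2 * s ≤ n := by
    intro s hs
    have := mul_le_mul_of_nonneg_left (mem_filter.1 hs).2 (by positivity : 0 ≤ 8 * d * K ^ 2)
    nlinarith [mul_le_mul_of_nonneg_right hδ (Nat.cast_nonneg (α := ℝ) n)]
  calc ∑ v : Fin n → R with v ≠ 0 ∧ hammingNorm v ≤ δ * n, (#(kernelMatchings d v) : ℝ)
      ≤ ∑ s ∈ (Icc 1 n).filter (fun s : ℕ => (s : ℝ) ≤ δ * n),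
          ∑ v : Fin n → R with hammingNorm v = s, (#(kernelMatchings d v) : ℝ) := by
        rw [← sum_fiberwise_of_maps_to (g := hammingNorm) fun v hv => ?_]
        · gcongr
          exact subset_univ _
        · obtain ⟨hv₀, hv₁⟩ := (mem_filter.1 hv).2
          have hle : hammingNorm v ≤ n := hammingNorm_le_card_fintype.trans_eq (Fintype.card_fin n)
          exact mem_filter.2 ⟨mem_Icc.2 ⟨hammingNorm_pos_iff.2 hv₀, hle⟩, hv₁⟩
    _ ≤ ∑ s ∈ (Icc 1 n).filter (fun s : ℕ => (s : ℝ) ≤ δ * n),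
          #(perfectMatchings (univ : Finset (Fin n × Fin d))) *
            (2 * K * √(2 * d / n) * (s * (1 / 2) ^ s)) := sum_le_sum fun s hs => by
        have hs₀ : s ≠ 0 := by grind
        refine (sum_card_kernelMatchings_hammingNorm_eq_le hd hs₀ ?_).trans
          (mul_le_mul_of_nonneg_left (nearRate_mul_sqrt_pow_le hs₀ (hsmall s hs))
            (Nat.cast_nonneg _))
        have hsd : (0 : ℝ) ≤ d * s := by positivity
        exact_mod_cast (by nlinarith [hsmall s hs] : (16 * (s * d) : ℝ) ≤ n)
    _ ≤ #(perfectMatchings (univ : Finset (Fin n × Fin d))) * (2 * K * √(2 * d / n) * 2) := by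
        have hK₀ : 0 ≤ K := by rw [hK, nearRate]; positivity
        rw [← mul_sum, ← mul_sum]
        gcongr
        exact sum_mul_half_pow_le_two _
    _ = _ := by ring

lemma sum_card_kernelMatchings_nearConstant_le [Nontrivial R] [NoZeroDivisors R] (hd : 3 ≤ d)
    (hdR : (d : R) ≠ 0) (hδ : δ * (8 * d * nearRate (Fintype.card R) d ^ 2) ≤ 1) (hn : 0 < n) :
    ∑ v ∈ nearConstant R n δ, (#(kernelMatchings d v) : ℝ) ≤
      #(perfectMatchings (univ : Finset (Fin n × Fin d))) *
        (1 + 4 * nearRate (Fintype.card R) d * √(2 * d / n)) := by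
  have hsub : ∀ v ∈ nearConstant R n δ, #(kernelMatchings d v) ≠ 0 →
      v ∈ insert 0 ({v | v ≠ 0 ∧ hammingNorm v ≤ δ * n} : Finset (Fin n → R)) := by
    intro v hv hker
    obtain ⟨a, ha⟩ := (mem_filter.1 hv).2
    obtain rfl : a = 0 := by
      by_contra ha₀
      refine hker (card_eq_zero.2 (kernelMatchings_eq_empty_of_hammingDist_lt hdR ha₀ ?_))
      have hδd : δ * d < 1 := by
        have hd₀ : (3 : ℝ) ≤ d := mod_cast hd
        have hq : (1 : ℝ) ≤ Fintype.card R := mod_cast Fintype.card_pos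
        have : (3 : ℝ) ≤ d * Fintype.card R := by nlinarith
        by_contra! h
        have : (1 : ℝ) < 8 * nearRate (Fintype.card R) d ^ 2 := by rw [nearRate]; nlinarith
        nlinarith
      have hnR : (0 : ℝ) < n := mod_cast hn
      exact_mod_cast (by nlinarith : (hammingDist v (fun _ => a) * d : ℝ) < n)
    rw [mem_insert, mem_filter_univ, ← hammingDist_zero_right]
    exact (em (v = 0)).imp_right fun h => ⟨h, ha⟩
  calc ∑ v ∈ nearConstant R n δ, (#(kernelMatchings d v) : ℝ)
      ≤ ∑ v ∈ insert 0 ({v | v ≠ 0 ∧ hammingNorm v ≤ δ * n} : Finset (Fin n → R)),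
          (#(kernelMatchings d v) : ℝ) := mod_cast sum_le_sum_of_ne_zero hsub
    _ ≤ #(perfectMatchings (univ : Finset (Fin n × Fin d))) * 1 +
        #(perfectMatchings (univ : Finset (Fin n × Fin d))) *
          (4 * nearRate (Fintype.card R) d * √(2 * d / n)) := by
        rw [sum_insert (by simp)]
        gcongr
        · rw [mul_one]
          exact_mod_cast card_kernelMatchings_le_card_perfectMatchings
        · exact sum_card_kernelMatchings_ne_zero_le hd hδ
    _ = _ := by ring

end NearRegion

section ColorTypes

variable {X C : Type*} [Fintype X] [DecidableEq C]

/-- The type of a coloring: how many points receive each color. -/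
def colorType (c : X → C) (u : C) : ℕ := #{x | c x = u}

lemma colorType_le_card (c : X → C) (u : C) : colorType c u ≤ Fintype.card X :=
  card_le_univ _

lemma colorType_comp_perm (c : X → C) (π : Equiv.Perm X) : colorType (c ∘ π) = colorType c :=
  funext fun _ => card_equiv π fun x => by simp

lemma exists_perm_of_colorType_eq {c c' : X → C} (h : colorType c' = colorType c) :
    ∃ π : Equiv.Perm X, c' = c ∘ π := by
  have hfib : ∀ u, Nonempty ({x // c' x = u} ≃ {x // c x = u}) := fun u => by
    rw [← Fintype.card_eq, Fintype.card_subtype, Fintype.card_subtype]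
    exact congrFun h u
  exact ⟨Equiv.ofFiberEquiv fun u => (hfib u).some,
    funext fun x => (Equiv.ofFiberEquiv_map _ x).symm⟩

lemma colorType_comp_fst {n d : ℕ} (c : Fin n → C) (u : C) :
    colorType (fun x : Fin n × Fin d => c x.1) u = d * colorType c u := by
  have h : ({x : Fin n × Fin d | c x.1 = u} : Finset _) = ({k | c k = u} : Finset _) ×ˢ univ := by
    ext
    simp
  rw [colorType, h, card_product, card_fin, mul_comm, colorType]

variable [Fintype C]

lemma sum_colorType (c : X → C) : ∑ u, colorType c u = Fintype.card X :=
  (card_eq_sum_card_fiberwise fun _ _ => mem_univ _).symm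

lemma prod_comp_eq_prod_pow_colorType {M : Type*} [CommMonoid M] (r : C → M) (c : X → C) :
    ∏ x, r (c x) = ∏ u, r u ^ colorType c u := by
  simp only [← prod_fiberwise' univ c r, prod_const, colorType]

/-- The probability of observing exactly `c` when the colors are drawn independently from the
empirical distribution of `c`. -/
noncomputable def empiricalProb (c : X → C) : ℝ :=
  ∏ u, (colorType c u / Fintype.card X : ℝ) ^ colorType c u

lemma empiricalProb_nonneg (c : X → C) : 0 ≤ empiricalProb c :=
  prod_nonneg fun _ _ => by positivity

lemma sum_colorType_div_card_pow (c : X → C) :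
    (∑ u, (colorType c u / Fintype.card X : ℝ)) ^ Fintype.card X = 1 := by
  rcases Nat.eq_zero_or_pos (Fintype.card X) with h | h
  · rw [h, pow_zero]
  · rw [← sum_div, ← Nat.cast_sum, sum_colorType, div_self (by positivity), one_pow]

variable [DecidableEq X]

/-- The colorings of the same type as `c`. -/
def typeClass (c : X → C) : Finset (X → C) := {c' | colorType c' = colorType c}

lemma mem_typeClass {c c' : X → C} : c' ∈ typeClass c ↔ colorType c' = colorType c :=
  mem_filter_univ c'

lemma card_typeClass_mul (c : X → C) :
    #(typeClass c) * ∏ u, (colorType c u).factorial = (Fintype.card X).factorial := by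
  have hfiber : ∀ c' ∈ typeClass c, #{π : Equiv.Perm X | c ∘ π = c'} =
      ∏ u, (colorType c u).factorial := fun c' hc' => by
    obtain ⟨π₀, rfl⟩ := exists_perm_of_colorType_eq (mem_typeClass.1 hc')
    simp only [colorType, ← Fintype.card_subtype]
    rw [← DomMulAct.stabilizer_card c, Fintype.card_subtype, Fintype.card_subtype]
    refine card_equiv (Equiv.mulRight π₀⁻¹) fun π => ?_
    rw [mem_filter_univ, mem_filter_univ, Equiv.coe_mulRight, Equiv.Perm.coe_mul,
      ← Function.comp_assoc, Equiv.Perm.inv_def, Equiv.comp_symm_eq]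
  have hmaps : ∀ π ∈ (univ : Finset (Equiv.Perm X)), c ∘ π ∈ typeClass c := fun π _ =>
    mem_typeClass.2 (colorType_comp_perm c π)
  rw [← sum_const_nat hfiber, ← card_eq_sum_card_fiberwise hmaps, card_univ, Fintype.card_perm]

lemma sum_prod_pow_colorType {R : Type*} [CommSemiring R] (ν : C → R) :
    ∑ c : X → C, ∏ u, ν u ^ colorType c u = (∑ u, ν u) ^ Fintype.card X := by
  simp only [← prod_comp_eq_prod_pow_colorType]
  rw [← Fintype.prod_sum fun _ => ν, prod_const, card_univ]

lemma factorial_mul_pow_le_factorial_mul_pow (k l : ℕ) :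
    k.factorial * k ^ l ≤ l.factorial * k ^ k := by
  rcases le_total k l with h | h
  · calc k.factorial * k ^ l = k.factorial * k ^ (l - k) * k ^ k := by
          rw [mul_assoc, ← pow_add, Nat.sub_add_cancel h]
      _ ≤ l.factorial * k ^ k := Nat.mul_le_mul_right _ (Nat.factorial_mul_pow_sub_le_factorial h)
  · calc k.factorial * k ^ l = l.factorial * k.descFactorial (k - l) * k ^ l := by
          rw [← Nat.factorial_mul_descFactorial (Nat.sub_le k l), Nat.sub_sub_self h]
      _ ≤ l.factorial * k ^ (k - l) * k ^ l := by gcongr; exact Nat.descFactorial_le_pow k _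
      _ = l.factorial * k ^ k := by rw [mul_assoc, ← pow_add, Nat.sub_add_cancel h]

-- Among independent colors drawn from the distribution of `c`, the type of `c` is the likeliest.
lemma card_typeClass_mul_prod_pow_le (c c' : X → C) :
    #(typeClass c') * ∏ u, colorType c u ^ colorType c' u ≤
      #(typeClass c) * ∏ u, colorType c u ^ colorType c u := by
  refine Nat.le_of_mul_le_mul_right ?_
    (prod_pos fun u _ => Nat.factorial_pos (colorType c' u) :
      0 < ∏ u, (colorType c' u).factorial)
  refine Nat.le_of_mul_le_mul_right ?_
    (prod_pos fun u _ => Nat.factorial_pos (colorType c u) :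
      0 < ∏ u, (colorType c u).factorial)
  calc #(typeClass c') * (∏ u, colorType c u ^ colorType c' u) * (∏ u, (colorType c' u).factorial) *
        ∏ u, (colorType c u).factorial
      = (Fintype.card X).factorial *
          ∏ u, (colorType c u).factorial * colorType c u ^ colorType c' u := by
        rw [← card_typeClass_mul c', prod_mul_distrib]
        ring
    _ ≤ (Fintype.card X).factorial *
          ∏ u, (colorType c' u).factorial * colorType c u ^ colorType c u := by
        refine Nat.mul_le_mul_left _ (prod_le_prod' fun u _ => ?_)
        exact factorial_mul_pow_le_factorial_mul_pow _ _
    _ = _ := by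
        rw [← card_typeClass_mul c, prod_mul_distrib]
        ring

-- There are at most `(|X| + 1) ^ |C|` types.
lemma sum_le_of_sum_typeClass_le {f : (X → C) → ℝ} {B : ℝ} (hB₀ : 0 ≤ B)
    (hB : ∀ c, ∑ c' ∈ typeClass c, f c' ≤ B) :
    ∑ c, f c ≤ (Fintype.card X + 1) ^ Fintype.card C * B := by
  have hcard : #(univ.image (colorType (X := X) (C := C))) ≤
      (Fintype.card X + 1) ^ Fintype.card C := by
    refine (card_le_card (t := Fintype.piFinset fun _ : C => range (Fintype.card X + 1))
      fun t ht => ?_).trans_eq ?_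
    · obtain ⟨c, -, rfl⟩ := mem_image.1 ht
      exact Fintype.mem_piFinset.2 fun u => mem_range_succ_iff.2 (colorType_le_card c u)
    · rw [Fintype.card_piFinset, card_range, prod_const, card_univ]
  have hmaps : ∀ c ∈ (univ : Finset (X → C)), colorType c ∈ univ.image (colorType (X := X)) :=
    fun c hc => mem_image_of_mem _ hc
  rw [← sum_fiberwise_of_maps_to hmaps]
  refine (sum_le_card_nsmul _ _ B fun t ht => ?_).trans ?_
  · obtain ⟨c, -, rfl⟩ := mem_image.1 ht
    exact hB c
  · rw [nsmul_eq_mul]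
    gcongr
    exact_mod_cast hcard

lemma sum_typeClass_prod_pow (ν : C → ℝ) (c : X → C) :
    ∑ c' ∈ typeClass c, ∏ u, ν u ^ colorType c' u = #(typeClass c) * ∏ u, ν u ^ colorType c u := by
  rw [← nsmul_eq_mul, ← sum_const]
  exact sum_congr rfl fun c' hc' => by rw [mem_typeClass.1 hc']

lemma one_le_card_typeClass_mul_empiricalProb (c : X → C) :
    1 ≤ (Fintype.card X + 1) ^ Fintype.card C * (#(typeClass c) * empiricalProb c) := by
  refine (sum_colorType_div_card_pow c).symm.trans_le ?_
  rw [← sum_prod_pow_colorType]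
  refine sum_le_of_sum_typeClass_le (mul_nonneg (Nat.cast_nonneg _) (empiricalProb_nonneg c))
    fun c' => ?_
  rw [sum_typeClass_prod_pow, empiricalProb]
  simp only [div_pow, prod_div_distrib, prod_pow_eq_pow_sum, sum_colorType, ← mul_div_assoc]
  gcongr ?_ / _
  exact_mod_cast card_typeClass_mul_prod_pow_le c c'

lemma sum_empiricalProb_le :
    ∑ c : X → C, empiricalProb c ≤ (Fintype.card X + 1) ^ Fintype.card C := by
  rw [← mul_one (((Fintype.card X : ℝ) + 1) ^ Fintype.card C)]
  refine sum_le_of_sum_typeClass_le zero_le_one fun c => ?_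
  calc ∑ c' ∈ typeClass c, empiricalProb c'
      = ∑ c' ∈ typeClass c, ∏ u, (colorType c u / Fintype.card X : ℝ) ^ colorType c' u :=
        sum_congr rfl fun c' hc' => by rw [empiricalProb, mem_typeClass.1 hc']
    _ ≤ ∑ c' : X → C, ∏ u, (colorType c u / Fintype.card X : ℝ) ^ colorType c' u :=
        sum_le_sum_of_subset_of_nonneg (subset_univ _) fun _ _ _ =>
          prod_nonneg fun _ _ => by positivity
    _ = 1 := by rw [sum_prod_pow_colorType, sum_colorType_div_card_pow]

end ColorTypes

section EdgeSums

variable {X C : Type*} [Fintype X] [DecidableEq X] [Fintype C]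

/-- The sum over all perfect matchings of the product over the half-edges of the weight `w` of
their color and that of their partner; an edge with colors `u` and `u'` thus has weight
`w u u' * w u' u`. -/
def edgeSum (w : C → C → ℂ) (c : X → C) : ℂ :=
  ∑ σ ∈ perfectMatchings univ, ∏ x, w (c x) (c (σ x))

/-- The quadratic form with matrix `Ω`. -/
def quadForm (Ω : C → C → ℂ) (y : C → ℂ) : ℂ :=
  ∑ u, ∑ u', Ω u u' * y u * y u'

variable {σ : Equiv.Perm X}

-- Of each matched pair, the half-edge numbered first is sent to `false`.
omit [Fintype C] in
lemma exists_equiv_prod_bool (hσ : σ ∈ perfectMatchings univ) :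
    ∃ (s : Finset X) (e : s × Bool ≃ X), ∀ t b, σ (e (t, b)) = e (t, !b) := by
  obtain ⟨hinv, hne⟩ := mem_perfectMatchings_univ.1 hσ
  let o := Fintype.equivFin X
  let g : ({x | o x < o (σ x)} : Finset X) × Bool → X := fun q => if q.2 then σ q.1 else q.1
  have hmem : ∀ t : ({x | o x < o (σ x)} : Finset X), o t < o (σ t) := fun t =>
    (mem_filter.1 t.2).2
  have hg : Function.Bijective g := by
    refine ⟨?_, fun x => ?_⟩
    · rintro ⟨s, b⟩ ⟨t, b'⟩ h
      have hs := hmem s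
      have ht := hmem t
      cases b <;> cases b' <;> simp only [g, Bool.false_eq_true, if_false, if_true] at h
      · rw [Subtype.ext h]
      · rw [h, hinv] at hs
        exact absurd hs ht.asymm
      · rw [← h, hinv] at ht
        exact absurd ht hs.asymm
      · rw [Subtype.ext (σ.injective h)]
    · rcases lt_or_gt_of_ne fun h => hne x (o.injective h) with h | h
      · exact ⟨(⟨σ x, by simpa [hinv] using h⟩, true), by simp [g, hinv]⟩
      · exact ⟨(⟨x, by simpa using h⟩, false), by simp [g]⟩
  refine ⟨_, Equiv.ofBijective g hg, fun t b => ?_⟩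
  cases b <;> simp [g, hinv]

lemma sum_prod_apply_matching (hσ : σ ∈ perfectMatchings univ) (w : C → C → ℂ) :
    ∑ c : X → C, ∏ x, w (c x) (c (σ x)) =
      (∑ u, ∑ u', w u u' * w u' u) ^ (Fintype.card X / 2) := by
  obtain ⟨s, e, he⟩ := exists_equiv_prod_bool hσ
  have hcard : Fintype.card X / 2 = Fintype.card s := by
    rw [← Fintype.card_congr e, Fintype.card_prod, Fintype.card_bool,
      Nat.mul_div_cancel _ two_pos]
  let F : (s → Bool → C) ≃ (X → C) :=
    (Equiv.curry s Bool C).symm.trans (e.arrowCongr (Equiv.refl C))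
  have hF : ∀ q t b, F q (e (t, b)) = q t b := fun q t b => by simp [F]
  calc ∑ c : X → C, ∏ x, w (c x) (c (σ x))
      = ∑ q : s → Bool → C, ∏ t, w (q t true) (q t false) * w (q t false) (q t true) := by
        rw [← F.sum_comp]
        refine sum_congr rfl fun q _ => ?_
        rw [← e.prod_comp, Fintype.prod_prod_type]
        simp only [Fintype.prod_bool, he, hF, Bool.not_true, Bool.not_false]
    _ = (∑ f : Bool → C, w (f true) (f false) * w (f false) (f true)) ^ (Fintype.card X / 2) := by
        rw [← Fintype.prod_sum fun (_ : s) (f : Bool → C) =>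
            w (f true) (f false) * w (f false) (f true),
          prod_const, card_univ, hcard]
    _ = _ := by
        rw [← (Equiv.boolArrowEquivProd C).symm.sum_comp, Fintype.sum_prod_type]
        exact congrArg (· ^ _) (sum_congr rfl fun u _ => sum_congr rfl fun u' _ => mul_comm _ _)

lemma sum_prod_mul_edgeSum (w : C → C → ℂ) (y : C → ℂ) :
    ∑ c : X → C, (∏ x, y (c x)) * edgeSum w c =
      #(perfectMatchings (univ : Finset X)) *
        quadForm (fun u u' => w u u' * w u' u) y ^ (Fintype.card X / 2) := by
  simp only [edgeSum, mul_sum, ← prod_mul_distrib]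
  rw [sum_comm, sum_congr rfl fun σ hσ => sum_prod_apply_matching hσ fun u u' => y u * w u u',
    sum_const, nsmul_eq_mul, quadForm]
  congr! 4 with u - u' -
  ring

omit [Fintype C] in
lemma edgeSum_comp_perm (w : C → C → ℂ) (c : X → C) (π : Equiv.Perm X) :
    edgeSum w (c ∘ π) = edgeSum w c := by
  refine sum_equiv (MulAut.conj π).toEquiv (fun σ => ?_) fun σ _ => ?_
  · have hconj : ∀ x, (π * σ * π⁻¹) (π x) = π (σ x) := fun x => by simp
    change _ ↔ π * σ * π⁻¹ ∈ _
    rw [mem_perfectMatchings_univ, mem_perfectMatchings_univ,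
      ← π.forall_congr_right (q := fun x => (π * σ * π⁻¹) ((π * σ * π⁻¹) x) = x),
      ← π.forall_congr_right (q := fun x => (π * σ * π⁻¹) x ≠ x)]
    simp only [hconj, π.injective.eq_iff, π.injective.ne_iff]
  · change _ = ∏ x, w (c x) (c ((π * σ * π⁻¹) x))
    rw [← Equiv.prod_comp π fun x => w (c x) (c ((π * σ * π⁻¹) x))]
    simp

end EdgeSums

section CoefficientExtraction

lemma sum_stdAddChar_pow_mul_neg_pow {m a b : ℕ} (ha : a ≤ m) (hb : b ≤ m) :
    ∑ k : ZMod (m + 1), ZMod.stdAddChar k ^ a * ZMod.stdAddChar (-k) ^ b =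
      if a = b then (m + 1 : ℂ) else 0 := by
  have hterm : ∀ k : ZMod (m + 1), ZMod.stdAddChar k ^ a * ZMod.stdAddChar (-k) ^ b =
      ZMod.stdAddChar (k * ((a : ZMod (m + 1)) - (b : ZMod (m + 1)))) := fun k => by
    rw [← AddChar.map_nsmul_eq_pow, ← AddChar.map_nsmul_eq_pow, ← AddChar.map_add_eq_mul,
      nsmul_eq_mul, nsmul_eq_mul]
    congr 1
    ring
  have hzero : (a : ZMod (m + 1)) - b = 0 ↔ a = b := by
    rw [sub_eq_zero, ZMod.natCast_eq_natCast_iff, Nat.ModEq, Nat.mod_eq_of_lt (by omega),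
      Nat.mod_eq_of_lt (by omega)]
  rw [sum_congr rfl fun k _ => hterm k,
    AddChar.sum_mulShift _ (ZMod.isPrimitive_stdAddChar (m + 1)), ZMod.card]
  simp [hzero]

variable {X C : Type*} [Fintype X] [DecidableEq X] [Fintype C] [DecidableEq C]

omit [DecidableEq X] in
lemma sum_prod_stdAddChar (c c₀ : X → C) :
    ∑ k : C → ZMod (Fintype.card X + 1), (∏ u, ZMod.stdAddChar (-k u) ^ colorType c₀ u) *
        ∏ x, ZMod.stdAddChar (k (c x)) =
      if colorType c = colorType c₀ then (Fintype.card X + 1 : ℂ) ^ Fintype.card C else 0 := by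
  calc _ = ∑ k : C → ZMod (Fintype.card X + 1),
          ∏ u, ZMod.stdAddChar (k u) ^ colorType c u * ZMod.stdAddChar (-k u) ^ colorType c₀ u := by
        refine sum_congr rfl fun k _ => ?_
        rw [prod_comp_eq_prod_pow_colorType (fun u => ZMod.stdAddChar (k u)), ← prod_mul_distrib]
        exact prod_congr rfl fun u _ => mul_comm _ _
    _ = ∏ u, if colorType c u = colorType c₀ u then (Fintype.card X + 1 : ℂ) else 0 := by
        rw [← Fintype.prod_sum fun u (k : ZMod (Fintype.card X + 1)) =>
          ZMod.stdAddChar k ^ colorType c u * ZMod.stdAddChar (-k) ^ colorType c₀ u]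
        exact prod_congr rfl fun u _ =>
          sum_stdAddChar_pow_mul_neg_pow (colorType_le_card c u) (colorType_le_card c₀ u)
    _ = _ := by
        simp only [Finset.prod_ite_zero, mem_univ, true_implies, funext_iff, prod_const, card_univ]

variable {E : (X → C) → ℂ} {r : C → ℝ}

lemma sum_prod_stdAddChar_mul_sum (hE : ∀ c (π : Equiv.Perm X), E (c ∘ π) = E c) (c₀ : X → C) :
    ∑ k : C → ZMod (Fintype.card X + 1), (∏ u, ZMod.stdAddChar (-k u) ^ colorType c₀ u) *
        ∑ c, (∏ x, (r (c x) * ZMod.stdAddChar (k (c x)) : ℂ)) * E c =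
      (Fintype.card X + 1) ^ Fintype.card C *
        (#(typeClass c₀) * (E c₀ * ∏ u, (r u : ℂ) ^ colorType c₀ u)) := by
  calc _ = ∑ c, (∑ k : C → ZMod (Fintype.card X + 1),
          (∏ u, ZMod.stdAddChar (-k u) ^ colorType c₀ u) * ∏ x, ZMod.stdAddChar (k (c x))) *
            (E c * ∏ u, (r u : ℂ) ^ colorType c u) := by
        simp only [mul_sum, sum_mul]
        rw [sum_comm]
        refine sum_congr rfl fun _ _ => sum_congr rfl fun k _ => ?_
        rw [prod_mul_distrib, prod_comp_eq_prod_pow_colorType fun u => (r u : ℂ)]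
        ring
    _ = ∑ _c ∈ typeClass c₀, (Fintype.card X + 1 : ℂ) ^ Fintype.card C *
          (E c₀ * ∏ u, (r u : ℂ) ^ colorType c₀ u) := by
        rw [typeClass, sum_filter]
        refine sum_congr rfl fun c _ => ?_
        rw [sum_prod_stdAddChar, ite_mul, zero_mul]
        split_ifs with h
        · obtain ⟨π, rfl⟩ := exists_perm_of_colorType_eq h
          rw [hE, h]
        · rfl
    _ = _ := by
        rw [sum_const, nsmul_eq_mul]
        ring

-- Cauchy's estimate for the coefficient of `∏ u, y u ^ colorType c₀ u`, with the torus replaced by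
-- roots of unity of order larger than the degree.
lemma card_typeClass_mul_norm_le {B : ℝ} (hE : ∀ c (π : Equiv.Perm X), E (c ∘ π) = E c)
    (hr : ∀ u, 0 ≤ r u)
    (hB : ∀ y : C → ℂ, (∀ u, ‖y u‖ = r u) → ‖∑ c, (∏ x, y (c x)) * E c‖ ≤ B) (c₀ : X → C) :
    #(typeClass c₀) * (‖E c₀‖ * ∏ u, r u ^ colorType c₀ u) ≤ B := by
  have hψ : ∀ k : ZMod (Fintype.card X + 1), ‖ZMod.stdAddChar k‖ = 1 := AddChar.norm_apply _
  have hN : (0 : ℝ) < (Fintype.card X + 1) ^ Fintype.card C := by positivity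
  refine le_of_mul_le_mul_left ?_ hN
  calc (Fintype.card X + 1 : ℝ) ^ Fintype.card C *
        (#(typeClass c₀) * (‖E c₀‖ * ∏ u, r u ^ colorType c₀ u))
      = ‖(Fintype.card X + 1 : ℂ) ^ Fintype.card C *
          (#(typeClass c₀) * (E c₀ * ∏ u, (r u : ℂ) ^ colorType c₀ u))‖ := by
        have hNC : ‖(Fintype.card X + 1 : ℂ)‖ = Fintype.card X + 1 := by
          exact_mod_cast Complex.norm_natCast (Fintype.card X + 1)
        simp only [norm_mul, norm_pow, norm_prod, hNC, Complex.norm_natCast, Complex.norm_real,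
          Real.norm_of_nonneg (hr _)]
    _ ≤ ∑ _k : C → ZMod (Fintype.card X + 1), B := by
        rw [← sum_prod_stdAddChar_mul_sum hE c₀]
        refine norm_sum_le_of_le _ fun k _ => ?_
        rw [norm_mul, norm_prod]
        simp only [norm_pow, hψ, one_pow, prod_const_one, one_mul]
        refine hB (fun u => r u * ZMod.stdAddChar (k u)) fun u => ?_
        rw [norm_mul, hψ, mul_one, Complex.norm_real, Real.norm_of_nonneg (hr u)]
    _ = (Fintype.card X + 1) ^ Fintype.card C * B := by
        rw [sum_const, card_univ, Fintype.card_fun, ZMod.card, nsmul_eq_mul]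
        push_cast
        rfl

lemma empiricalProb_comp_fst {n d : ℕ} (hd : d ≠ 0) (u : Fin n → C) :
    empiricalProb (fun x : Fin n × Fin d => u x.1) =
      (∏ b, ((colorType u b / n : ℝ) ^ ((d - 1) / d : ℝ)) ^
        colorType (fun x : Fin n × Fin d => u x.1) b) * empiricalProb u := by
  rw [empiricalProb, empiricalProb, ← prod_mul_distrib]
  refine prod_congr rfl fun b _ => ?_
  have hν : (0 : ℝ) ≤ colorType u b / n := by positivity
  have hratio : (↑(d * colorType u b) / Fintype.card (Fin n × Fin d) : ℝ) = colorType u b / n := by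
    rw [Fintype.card_prod, Fintype.card_fin, Fintype.card_fin, mul_comm n]
    push_cast
    exact mul_div_mul_left _ _ (Nat.cast_ne_zero.2 hd)
  have hexp : ((d - 1) / d : ℝ) * ↑(d * colorType u b) = ↑((d - 1) * colorType u b) := by
    rw [Nat.cast_mul, Nat.cast_mul, Nat.cast_pred (Nat.pos_of_ne_zero hd)]
    field_simp
  rw [colorType_comp_fst, hratio, ← Real.rpow_natCast (_ ^ _), ← Real.rpow_mul hν, hexp,
    Real.rpow_natCast, Fintype.card_fin, ← pow_add, ← Nat.add_one_mul,
    Nat.sub_add_cancel (Nat.pos_of_ne_zero hd)]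

lemma norm_edgeSum_comp_fst_le {n d : ℕ} {κ : ℝ} (hd : d ≠ 0) (w : C → C → ℂ) (u : Fin n → C)
    (hκ : ∀ y : C → ℂ, (∀ b, ‖y b‖ = (colorType u b / n : ℝ) ^ ((d - 1) / d : ℝ)) →
      ‖quadForm (fun b b' => w b b' * w b' b) y‖ ≤ κ) :
    ‖edgeSum w fun x : Fin n × Fin d => u x.1‖ ≤
      #(perfectMatchings (univ : Finset (Fin n × Fin d))) * κ ^ (n * d / 2) *
        (n * d + 1) ^ Fintype.card C * empiricalProb u := by
  set c : Fin n × Fin d → C := fun x => u x.1 with hc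
  have hcard : Fintype.card (Fin n × Fin d) = n * d := by simp
  have hextract := card_typeClass_mul_norm_le
    (B := #(perfectMatchings (univ : Finset (Fin n × Fin d))) * κ ^ (n * d / 2))
    (edgeSum_comp_perm w)
    (fun b => Real.rpow_nonneg (by positivity : (0 : ℝ) ≤ colorType u b / n) ((d - 1) / d))
    (fun y hy => by
      rw [sum_prod_mul_edgeSum, norm_mul, norm_pow, Complex.norm_natCast, hcard]
      gcongr
      exact hκ y hy) c
  have hone := one_le_card_typeClass_mul_empiricalProb c
  rw [hcard] at hone
  push_cast at hone
  calc ‖edgeSum w c‖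
      ≤ ‖edgeSum w c‖ * ((n * d + 1) ^ Fintype.card C * (#(typeClass c) * empiricalProb c)) :=
        le_mul_of_one_le_right (norm_nonneg _) hone
    _ = #(typeClass c) * (‖edgeSum w c‖ *
          ∏ b, ((colorType u b / n : ℝ) ^ ((d - 1) / d : ℝ)) ^ colorType c b) *
            ((n * d + 1) ^ Fintype.card C * empiricalProb u) := by
        rw [hc, empiricalProb_comp_fst hd]
        ring
    _ ≤ #(perfectMatchings (univ : Finset (Fin n × Fin d))) * κ ^ (n * d / 2) *
          ((n * d + 1) ^ Fintype.card C * empiricalProb u) := by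
        have := empiricalProb_nonneg u
        gcongr
    _ = _ := by ring

end CoefficientExtraction

section Interpolation

open Complex.HadamardThreeLines

variable {J : Type*} [Fintype J] {Ω : J → J → ℂ} {P : ℝ} {ν : J → ℝ} {φ : J → ℂ} {z : ℂ}

lemma norm_quadForm_le_sq_sum (hΩ : ∀ u u', ‖Ω u u'‖ ≤ 1) (y : J → ℂ) :
    ‖quadForm Ω y‖ ≤ (∑ u, ‖y u‖) ^ 2 := by
  rw [sq, sum_mul_sum]
  refine norm_sum_le_of_le _ fun u _ => norm_sum_le_of_le _ fun u' _ => ?_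
  rw [norm_mul, norm_mul]
  exact mul_le_mul_of_nonneg_right (mul_le_of_le_one_left (norm_nonneg _) (hΩ u u'))
    (norm_nonneg _)

/-- The analytic family interpolating between the `L²` bound for the quadratic form with matrix `Ω`,
on the line `re z = 0`, and its trivial `L¹` bound, on the line `re z = 1`, at the vector with
moduli `ν` and phases `φ`. -/
noncomputable def interpolant (Ω : J → J → ℂ) (P : ℝ) (ν : J → ℝ) (φ : J → ℂ) (z : ℂ) : ℂ :=
  (P : ℂ) ^ (z - 1) * quadForm Ω fun u => φ u * (ν u : ℂ) ^ ((1 + z) / 2)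

lemma diffContOnCl_interpolant (hP : P ≠ 0) :
    DiffContOnCl ℂ (interpolant Ω P ν φ) (verticalStrip 0 1) := by
  refine DifferentiableOn.diffContOnCl fun z hz => DifferentiableAt.differentiableWithinAt ?_
  rw [verticalStrip, Complex.closure_preimage_re, closure_Ioo zero_ne_one] at hz
  have hexp : (1 + z) / 2 ≠ 0 := fun h => by
    have hre := congrArg Complex.re h
    simp only [Complex.div_ofNat_re, Complex.add_re, Complex.one_re, Complex.zero_re] at hre
    linarith [hz.1]
  have hpow : ∀ u, DifferentiableAt ℂ (fun z : ℂ => (ν u : ℂ) ^ ((1 + z) / 2)) z := fun u =>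
    DifferentiableAt.const_cpow (by fun_prop) (Or.inr hexp)
  have hbase : DifferentiableAt ℂ (fun z : ℂ => (P : ℂ) ^ (z - 1)) z :=
    DifferentiableAt.const_cpow (by fun_prop) (Or.inl (Complex.ofReal_ne_zero.2 hP))
  unfold interpolant quadForm
  fun_prop

omit [Fintype J] in
lemma norm_mul_cpow (hν : ∀ u, 0 ≤ ν u) (hφ : ∀ u, ‖φ u‖ = 1) (hz : 0 ≤ z.re) (u : J) :
    ‖φ u * (ν u : ℂ) ^ ((1 + z) / 2)‖ = ν u ^ ((1 + z.re) / 2) := by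
  have hre : ((1 + z) / 2).re = (1 + z.re) / 2 := by simp
  have hne : ((1 + z) / 2).re ≠ 0 := by rw [hre]; positivity
  rw [norm_mul, hφ, one_mul, Complex.norm_cpow_eq_rpow_re_of_nonneg (hν u) hne, hre]

lemma norm_interpolant (hP : 0 < P) :
    ‖interpolant Ω P ν φ z‖ =
      P ^ (z.re - 1) * ‖quadForm Ω fun u => φ u * (ν u : ℂ) ^ ((1 + z) / 2)‖ := by
  rw [interpolant, norm_mul, Complex.norm_cpow_eq_rpow_re_of_pos hP, Complex.sub_re, Complex.one_re]

lemma norm_interpolant_le_one (hP : 1 ≤ P) (hΩ : ∀ u u', ‖Ω u u'‖ ≤ 1)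
    (hquad : ∀ x, ‖quadForm Ω x‖ ≤ P * ∑ u, ‖x u‖ ^ 2) (hν : ν ∈ stdSimplex ℝ J)
    (hφ : ∀ u, ‖φ u‖ = 1) (hz : z ∈ verticalClosedStrip 0 1) : ‖interpolant Ω P ν φ z‖ ≤ 1 := by
  have hP₀ : 0 < P := one_pos.trans_le hP
  have hbdd : BddAbove (norm ∘ interpolant Ω P ν φ '' verticalClosedStrip 0 1) := by
    refine ⟨1 * (∑ _u : J, 1) ^ 2, ?_⟩
    rintro _ ⟨z, hz, rfl⟩
    rw [Function.comp_apply, norm_interpolant hP₀]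
    refine mul_le_mul (Real.rpow_le_one_of_one_le_of_nonpos hP (sub_nonpos.2 hz.2))
      ((norm_quadForm_le_sq_sum hΩ _).trans ?_) (norm_nonneg _) zero_le_one
    gcongr with u
    rw [norm_mul_cpow hν.1 hφ hz.1]
    exact Real.rpow_le_one (hν.1 u) (mem_Icc_of_mem_stdSimplex hν u).2 (by linarith [hz.1])
  have hleft : ∀ z ∈ Complex.re ⁻¹' {0}, ‖interpolant Ω P ν φ z‖ ≤ 1 := fun z (hz : z.re = 0) => by
    have hsq : ∀ u, (ν u ^ ((1 + 0 : ℝ) / 2)) ^ 2 = ν u := fun u => by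
      rw [add_zero, ← Real.sqrt_eq_rpow, Real.sq_sqrt (hν.1 u)]
    have h := hquad fun u => φ u * (ν u : ℂ) ^ ((1 + z) / 2)
    simp only [norm_mul_cpow hν.1 hφ hz.ge, hz, hsq, hν.2, mul_one] at h
    rw [norm_interpolant hP₀, hz, zero_sub, Real.rpow_neg_one]
    exact inv_mul_le_one_of_le₀ h hP₀.le
  have hright : ∀ z ∈ Complex.re ⁻¹' {1}, ‖interpolant Ω P ν φ z‖ ≤ 1 := fun z (hz : z.re = 1) => by
    have h := norm_quadForm_le_sq_sum hΩ fun u => φ u * (ν u : ℂ) ^ ((1 + z) / 2)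
    simp only [norm_mul_cpow hν.1 hφ (zero_le_one.trans hz.ge), hz, add_self_div_two,
      Real.rpow_one, hν.2, one_pow] at h
    rwa [norm_interpolant hP₀, hz, sub_self, Real.rpow_zero, one_mul]
  simpa using norm_le_interp_of_mem_verticalClosedStrip₀₁' _ hz
    (diffContOnCl_interpolant hP₀.ne') hbdd hleft hright

-- By the maximum modulus principle, equality at an interior point makes the interpolant constant.
lemma one_le_norm_interpolant_one {s : ℝ} (hs : s ∈ Set.Ioo 0 1) (hP : 1 ≤ P)
    (hΩ : ∀ u u', ‖Ω u u'‖ ≤ 1) (hquad : ∀ x, ‖quadForm Ω x‖ ≤ P * ∑ u, ‖x u‖ ^ 2)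
    (hν : ν ∈ stdSimplex ℝ J) (hφ : ∀ u, ‖φ u‖ = 1) (h : 1 ≤ ‖interpolant Ω P ν φ s‖) :
    1 ≤ ‖interpolant Ω P ν φ 1‖ := by
  have hpre : IsPreconnected (verticalStrip 0 1) :=
    ((convex_Ioo (0 : ℝ) 1).linear_preimage Complex.reLm).isPreconnected
  have hmax : IsMaxOn (norm ∘ interpolant Ω P ν φ) (verticalStrip 0 1) s := fun z hz =>
    (norm_interpolant_le_one hP hΩ hquad hν hφ
      (Set.preimage_mono Set.Ioo_subset_Icc_self hz)).trans h
  have hone : (1 : ℂ) ∈ closure (verticalStrip 0 1) := by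
    rw [verticalStrip, Complex.closure_preimage_re, closure_Ioo zero_ne_one]
    simp
  rw [Complex.eqOn_closure_of_isPreconnected_of_isMaxOn_norm hpre
    (isOpen_Ioo.preimage Complex.continuous_re)
    (diffContOnCl_interpolant (one_pos.trans_le hP).ne') (by simpa [verticalStrip] using hs) hmax
    hone]
  exact h

lemma eq_of_one_le_norm_quadForm (hΩ : ∀ u u', ‖Ω u u'‖ ≤ 1) (hν : ν ∈ stdSimplex ℝ J)
    (hφ : ∀ u, ‖φ u‖ = 1) (h : 1 ≤ ‖quadForm Ω fun u => φ u * (ν u : ℂ)‖) {u u' v v' : J}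
    (hu : ν u ≠ 0) (hu' : ν u' ≠ 0) (hv : ν v ≠ 0) (hv' : ν v' ≠ 0) :
    Ω u u' * φ u * φ u' = Ω v v' * φ v * φ v' := by
  by_contra hne
  have hlt := norm_sum_lt_of_strictConvexSpace (r := 1)
    (t := univ) (w := fun q : J × J => ν q.1 * ν q.2) (z := fun q => Ω q.1 q.2 * φ q.1 * φ q.2)
    (fun q _ => mul_nonneg (hν.1 _) (hν.1 _))
    (by rw [Fintype.sum_prod_type, ← sum_mul_sum, hν.2, one_mul])
    (mem_univ (u, u')) (mem_univ (v, v')) hne (mul_ne_zero hu hu') (mul_ne_zero hv hv')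
    (fun q _ => by simpa [hφ] using hΩ q.1 q.2)
  rw [Fintype.sum_prod_type] at hlt
  refine (h.trans_eq (congrArg norm ?_)).not_gt hlt
  refine sum_congr rfl fun u _ => sum_congr rfl fun u' _ => ?_
  rw [Complex.real_smul]
  push_cast
  ring

lemma sq_eq_mul_of_le_norm_quadForm {s : ℝ} (hs : s ∈ Set.Ioo 0 1) (hP : 1 ≤ P)
    (hΩ : ∀ u u', ‖Ω u u'‖ ≤ 1) (hquad : ∀ x, ‖quadForm Ω x‖ ≤ P * ∑ u, ‖x u‖ ^ 2)
    (hν : ν ∈ stdSimplex ℝ J) {y : J → ℂ} (hy : ∀ u, ‖y u‖ = ν u ^ ((1 + s) / 2))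
    (h : P ^ (1 - s) ≤ ‖quadForm Ω y‖) {u u' : J} (hu : ν u ≠ 0) (hu' : ν u' ≠ 0) :
    Ω u u' ^ 2 = Ω u u * Ω u' u' := by
  have hP₀ : 0 < P := one_pos.trans_le hP
  let φ : J → ℂ := fun u => Complex.exp (Complex.arg (y u) * Complex.I)
  have hφ : ∀ u, ‖φ u‖ = 1 := fun u => Complex.norm_exp_ofReal_mul_I _
  have hφ₀ : φ u * φ u' ≠ 0 := mul_ne_zero (Complex.exp_ne_zero _) (Complex.exp_ne_zero _)
  have hpolar : y = fun u => φ u * (ν u : ℂ) ^ ((1 + s : ℂ) / 2) := funext fun u => by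
    rw [← Complex.norm_mul_exp_arg_mul_I (y u), hy, Complex.ofReal_cpow (hν.1 u), mul_comm]
    push_cast
    rfl
  have hs₁ : 1 ≤ ‖interpolant Ω P ν φ s‖ := by
    rw [norm_interpolant hP₀, ← hpolar, Complex.ofReal_re, ← neg_sub 1 s, Real.rpow_neg hP₀.le]
    exact (one_le_inv_mul₀ (by positivity)).2 h
  have hone := one_le_norm_interpolant_one hs hP hΩ hquad hν hφ hs₁
  simp only [interpolant, sub_self, Complex.cpow_zero, one_mul, add_self_div_two,
    Complex.cpow_one] at hone
  have hphase := fun {a b} (ha : ν a ≠ 0) (hb : ν b ≠ 0) =>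
    eq_of_one_le_norm_quadForm hΩ hν hφ hone ha hb hu hu'
  refine mul_right_cancel₀ (pow_ne_zero 2 hφ₀) ?_
  calc Ω u u' ^ 2 * (φ u * φ u') ^ 2 = (Ω u u' * φ u * φ u') * (Ω u u' * φ u * φ u') := by ring
    _ = (Ω u u * φ u * φ u) * (Ω u' u' * φ u' * φ u') := by rw [hphase hu hu, hphase hu' hu']
    _ = Ω u u * Ω u' u' * (φ u * φ u') ^ 2 := by ring

lemma exists_lt_forall_norm_quadForm_le {s : ℝ} (hs : s ∈ Set.Ioo 0 1) (hP : 1 ≤ P)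
    (hΩ : ∀ u u', ‖Ω u u'‖ ≤ 1) (hquad : ∀ x, ‖quadForm Ω x‖ ≤ P * ∑ u, ‖x u‖ ^ 2)
    {K : Set (J → ℝ)} (hKclosed : IsClosed K) (hK : K ⊆ stdSimplex ℝ J)
    (hpair : ∀ ν ∈ K, ∃ u u', ν u ≠ 0 ∧ ν u' ≠ 0 ∧ Ω u u' ^ 2 ≠ Ω u u * Ω u' u') :
    ∃ ρ, 0 ≤ ρ ∧ ρ < P ^ (1 - s) ∧
      ∀ ν ∈ K, ∀ y : J → ℂ, (∀ u, ‖y u‖ = ν u ^ ((1 + s) / 2)) → ‖quadForm Ω y‖ ≤ ρ := by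
  have hexp : 0 ≤ (1 + s) / 2 := by linarith [hs.1]
  let T : Set ((J → ℝ) × (J → ℂ)) :=
    {q | q.1 ∈ K} ∩ ⋂ u, {q | ‖q.2 u‖ = q.1 u ^ ((1 + s) / 2)}
  have hTclosed : IsClosed T := by
    refine (hKclosed.preimage continuous_fst).inter (isClosed_iInter fun u =>
      isClosed_eq (by fun_prop) (Continuous.rpow_const (by fun_prop) fun _ => Or.inr hexp))
  have hTcompact : IsCompact T := by
    refine ((isCompact_stdSimplex ℝ J).prod (isCompact_univ_pi fun _ =>
      isCompact_closedBall (0 : ℂ) 1)).of_isClosed_subset hTclosed fun q hq => ?_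
    refine ⟨hK hq.1, fun u _ => mem_closedBall_zero_iff.2 ?_⟩
    have hν := mem_Icc_of_mem_stdSimplex (hK hq.1) u
    exact (Set.mem_iInter.1 hq.2 u).trans_le (Real.rpow_le_one hν.1 hν.2 hexp)
  have hcont : Continuous fun q : (J → ℝ) × (J → ℂ) => ‖quadForm Ω q.2‖ := by
    unfold quadForm
    fun_prop
  rcases T.eq_empty_or_nonempty with hT | hT
  · refine ⟨0, le_rfl, by positivity, fun ν hν y hy => ?_⟩
    have hmem : (ν, y) ∈ T := ⟨hν, Set.mem_iInter.2 hy⟩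
    simp [hT] at hmem
  · obtain ⟨q, hq, hmax⟩ := hTcompact.exists_isMaxOn hT hcont.continuousOn
    refine ⟨_, norm_nonneg _, lt_of_not_ge fun hle => ?_, fun ν hν y hy =>
      hmax (a := (ν, y)) ⟨hν, Set.mem_iInter.2 hy⟩⟩
    obtain ⟨u, u', hu, hu', hne⟩ := hpair q.1 hq.1
    exact hne (sq_eq_mul_of_le_norm_quadForm hs hP hΩ hquad (hK hq.1) (Set.mem_iInter.1 hq.2) hle
      hu hu')

end Interpolation

section SpreadDistributions

variable {A B : Type*} [Fintype A] [Fintype B] {δ : ℝ} {ν : A × B → ℝ}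

/-- The probability distributions on `A × B` giving mass at most `1 - δ` to each line `{a} × B` and
`A × {b}`. -/
def spreadDistributions (A B : Type*) [Fintype A] [Fintype B] (δ : ℝ) : Set (A × B → ℝ) :=
  stdSimplex ℝ (A × B) ∩
    ({ν | ∀ a, ∑ b, ν (a, b) ≤ 1 - δ} ∩ {ν | ∀ b, ∑ a, ν (a, b) ≤ 1 - δ})

lemma isClosed_spreadDistributions : IsClosed (spreadDistributions A B δ) := by
  refine (isClosed_stdSimplex ℝ _).inter (IsClosed.inter ?_ ?_)
  · simp only [Set.ofPred_forall]
    exact isClosed_iInter fun a => isClosed_le (by fun_prop) continuous_const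
  · simp only [Set.ofPred_forall]
    exact isClosed_iInter fun b => isClosed_le (by fun_prop) continuous_const

lemma exists_fst_ne_of_mem_spreadDistributions (hδ : 0 < δ) (hν : ν ∈ spreadDistributions A B δ)
    (a : A) : ∃ u, ν u ≠ 0 ∧ u.1 ≠ a := by
  by_contra! h
  have hsum : ∑ b, ν (a, b) = 1 := by
    rw [← hν.1.2, Fintype.sum_prod_type]
    refine (Fintype.sum_eq_single (f := fun a => ∑ b, ν (a, b)) a fun a' ha =>
      sum_eq_zero fun b _ => ?_).symm
    exact not_not.1 fun hne => ha (h (a', b) hne)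
  linarith [hν.2.1 a]

lemma exists_snd_ne_of_mem_spreadDistributions (hδ : 0 < δ) (hν : ν ∈ spreadDistributions A B δ)
    (b : B) : ∃ u, ν u ≠ 0 ∧ u.2 ≠ b := by
  by_contra! h
  have hsum : ∑ a, ν (a, b) = 1 := by
    rw [← hν.1.2, Fintype.sum_prod_type_right]
    refine (Fintype.sum_eq_single (f := fun b => ∑ a, ν (a, b)) b fun b' hb =>
      sum_eq_zero fun a _ => ?_).symm
    exact not_not.1 fun hne => hb (h (a, b') hne)
  linarith [hν.2.2 b]

-- A set of points that pairwise share a coordinate lies on a line.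
lemma exists_ne_ne_of_mem_spreadDistributions (hδ : 0 < δ) (hν : ν ∈ spreadDistributions A B δ) :
    ∃ u u', ν u ≠ 0 ∧ ν u' ≠ 0 ∧ u.1 ≠ u'.1 ∧ u.2 ≠ u'.2 := by
  obtain ⟨u, -, hu⟩ := exists_ne_zero_of_sum_ne_zero (hν.1.2.trans_ne one_ne_zero)
  obtain ⟨v, hv, hvu⟩ := exists_fst_ne_of_mem_spreadDistributions hδ hν u.1
  obtain ⟨t, ht, htu⟩ := exists_snd_ne_of_mem_spreadDistributions hδ hν u.2
  by_contra! h
  have huv := h v u hv hu hvu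
  have htu₁ : t.1 = u.1 := not_not.1 fun hne => htu (h t u ht hu hne)
  exact htu ((h t v ht hv (htu₁.trans_ne hvu.symm)).trans huv)

end SpreadDistributions

section Characters

/-- The value `ψ (a' b)` of the standard additive character `ψ` at the half-edge colors
`u = (a, b)` and `u' = (a', b')`. -/
noncomputable def halfEdgeChar {N : ℕ} [NeZero N] (u u' : ZMod N × ZMod N) : ℂ :=
  ZMod.stdAddChar (u.2 * u'.1)

/-- The weight of an edge whose half-edges have colors `u` and `u'`. -/
noncomputable def edgeChar {N : ℕ} [NeZero N] (u u' : ZMod N × ZMod N) : ℂ :=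
  halfEdgeChar u u' * halfEdgeChar u' u

variable {N : ℕ} [NeZero N]

lemma edgeChar_eq (u u' : ZMod N × ZMod N) :
    edgeChar u u' = ZMod.stdAddChar (u.2 * u'.1 + u'.2 * u.1) :=
  (AddChar.map_add_eq_mul _ _ _).symm

lemma norm_edgeChar (u u' : ZMod N × ZMod N) : ‖edgeChar u u'‖ = 1 := by
  rw [edgeChar_eq]
  exact AddChar.norm_apply _ _

lemma sum_edgeChar_mul_conj (u u' : ZMod N × ZMod N) :
    ∑ v, edgeChar v u * starRingEnd ℂ (edgeChar v u') = if u = u' then (N : ℂ) ^ 2 else 0 := by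
  have hprim := ZMod.isPrimitive_stdAddChar N
  have hterm : ∀ v : ZMod N × ZMod N, edgeChar v u * starRingEnd ℂ (edgeChar v u') =
      ZMod.stdAddChar (v.1 * (u.2 - u'.2)) * ZMod.stdAddChar (v.2 * (u.1 - u'.1)) := fun v => by
    rw [edgeChar_eq, edgeChar_eq, ← AddChar.map_neg_eq_conj, ← AddChar.map_add_eq_mul,
      ← AddChar.map_add_eq_mul]
    congr 1
    ring
  simp only [hterm, Fintype.sum_prod_type, ← sum_mul_sum, AddChar.sum_mulShift _ hprim, ZMod.card,
    sub_eq_zero, Prod.ext_iff]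
  by_cases h₁ : u.1 = u'.1 <;> by_cases h₂ : u.2 = u'.2 <;> simp [h₁, h₂, sq]

lemma sum_norm_sq_sum_edgeChar_mul (x : ZMod N × ZMod N → ℂ) :
    ∑ v, ‖∑ u, edgeChar v u * x u‖ ^ 2 = (N : ℝ) ^ 2 * ∑ u, ‖x u‖ ^ 2 := by
  have hC : ∑ v, (‖∑ u, edgeChar v u * x u‖ ^ 2 : ℂ) = (N : ℂ) ^ 2 * ∑ u, (‖x u‖ ^ 2 : ℂ) := by
    calc _ = ∑ u, ∑ u', (∑ v, edgeChar v u * starRingEnd ℂ (edgeChar v u')) *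
            (x u * starRingEnd ℂ (x u')) := by
          simp only [← Complex.mul_conj', map_sum, map_mul, sum_mul]
          rw [sum_comm]
          refine sum_congr rfl fun u _ => ?_
          rw [sum_comm]
          refine sum_congr rfl fun v _ => ?_
          rw [mul_sum]
          exact sum_congr rfl fun u' _ => mul_mul_mul_comm _ _ _ _
      _ = _ := by simp [sum_edgeChar_mul_conj, mul_sum, Complex.mul_conj']
  exact_mod_cast hC

lemma norm_quadForm_edgeChar_le (x : ZMod N × ZMod N → ℂ) :
    ‖quadForm edgeChar x‖ ≤ N * ∑ u, ‖x u‖ ^ 2 := by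
  refine le_of_sq_le_sq ?_ (by positivity)
  calc ‖quadForm edgeChar x‖ ^ 2 ≤ (∑ u, ‖x u‖ * ‖∑ u', edgeChar u u' * x u'‖) ^ 2 := by
        gcongr
        refine norm_sum_le_of_le _ fun u _ => ?_
        rw [← norm_mul, mul_sum]
        exact (congrArg norm (sum_congr rfl fun u' _ => by ring)).le
    _ ≤ (∑ u, ‖x u‖ ^ 2) * ∑ u, ‖∑ u', edgeChar u u' * x u'‖ ^ 2 := sum_mul_sq_le_sq_mul_sq _ _ _
    _ = (N * ∑ u, ‖x u‖ ^ 2) ^ 2 := by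
        rw [sum_norm_sq_sum_edgeChar_mul]
        ring

lemma edgeChar_sq_ne {p : ℕ} [Fact p.Prime] (hp : p ≠ 2) {u u' : ZMod p × ZMod p}
    (h₁ : u.1 ≠ u'.1) (h₂ : u.2 ≠ u'.2) :
    edgeChar u u' ^ 2 ≠ edgeChar u u * edgeChar u' u' := by
  rw [edgeChar_eq, edgeChar_eq, edgeChar_eq, sq, ← AddChar.map_add_eq_mul,
    ← AddChar.map_add_eq_mul]
  intro h
  have htwo : (2 : ZMod p) ≠ 0 := Ring.two_ne_zero (by rwa [ZMod.ringChar_zmod_n])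
  refine mul_ne_zero htwo (mul_ne_zero (sub_ne_zero.2 h₁) (sub_ne_zero.2 h₂)) ?_
  linear_combination -ZMod.injective_stdAddChar h

lemma exists_lt_forall_norm_quadForm_edgeChar_le {p d : ℕ} [Fact p.Prime] (hp : p ≠ 2)
    (hd : 3 ≤ d) {δ : ℝ} (hδ : 0 < δ) :
    ∃ ρ, 0 ≤ ρ ∧ ρ < (p : ℝ) ^ (2 / d : ℝ) ∧
      ∀ ν ∈ spreadDistributions (ZMod p) (ZMod p) δ, ∀ y : ZMod p × ZMod p → ℂ,
        (∀ u, ‖y u‖ = ν u ^ ((d - 1) / d : ℝ)) → ‖quadForm edgeChar y‖ ≤ ρ := by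
  have hd₃ : (3 : ℝ) ≤ d := by exact_mod_cast hd
  have hs : (1 - 2 / d : ℝ) ∈ Set.Ioo 0 1 :=
    ⟨sub_pos.2 ((div_lt_one (by linarith)).2 (by linarith)), sub_lt_self _ (by positivity)⟩
  obtain ⟨ρ, hρ₀, hρ, h⟩ := exists_lt_forall_norm_quadForm_le hs
    (by exact_mod_cast (Fact.out : p.Prime).one_le) (fun u u' => (norm_edgeChar u u').le)
    norm_quadForm_edgeChar_le (isClosed_spreadDistributions (δ := δ)) Set.inter_subset_left
    fun ν hν => by
      obtain ⟨u, u', hu, hu', h₁, h₂⟩ := exists_ne_ne_of_mem_spreadDistributions hδ hν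
      exact ⟨u, u', hu, hu', edgeChar_sq_ne hp h₁ h₂⟩
  have hexp : (1 + (1 - 2 / d)) / 2 = ((d - 1) / d : ℝ) := by
    field_simp
    ring
  rw [sub_sub_cancel] at hρ
  rw [hexp] at h
  exact ⟨ρ, hρ₀, hρ, h⟩

end Characters

section PairSums

variable {n d N : ℕ} [NeZero N] {v t : Fin n → ZMod N}

/-- The sum over the perfect matchings of `[n] × [d]` of the character with frequency `t` of the
image of `v` under the adjacency matrix. -/
noncomputable def pairSum (d : ℕ) (v t : Fin n → ZMod N) : ℂ :=
  edgeSum halfEdgeChar fun x : Fin n × Fin d => (v x.1, t x.1)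

variable (d) in
lemma pairSum_comm : pairSum d v t = pairSum d t v := by
  refine sum_congr rfl fun σ hσ => ?_
  rw [← Equiv.prod_comp σ]
  refine prod_congr rfl fun x _ => ?_
  rw [(mem_perfectMatchings_univ.1 hσ).1, halfEdgeChar, halfEdgeChar, mul_comm]

lemma norm_pairSum_le :
    ‖pairSum d v t‖ ≤ #(perfectMatchings (univ : Finset (Fin n × Fin d))) := by
  refine (norm_sum_le _ _).trans_eq ?_
  simp only [halfEdgeChar, norm_prod, AddChar.norm_apply, prod_const_one, sum_const, nsmul_eq_mul,
    mul_one]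

lemma stdAddChar_sum {ι : Type*} (s : Finset ι) (f : ι → ZMod N) :
    ZMod.stdAddChar (∑ i ∈ s, f i) = ∏ i ∈ s, ZMod.stdAddChar (f i) :=
  map_prod ZMod.stdAddChar.toMonoidHom (fun i => Multiplicative.ofAdd (f i)) s

lemma sum_pairSum (v : Fin n → ZMod N) :
    ∑ t, pairSum d v t = (N : ℂ) ^ n * #(kernelMatchings d v) := by
  have hmatching : ∀ σ : Equiv.Perm (Fin n × Fin d),
      ∑ t : Fin n → ZMod N, ∏ x : Fin n × Fin d,
          halfEdgeChar (v x.1, t x.1) (v (σ x).1, t (σ x).1) =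
        if ∀ k, ∑ i, v (σ (k, i)).1 = 0 then (N : ℂ) ^ n else 0 := by
    intro σ
    calc _ = ∑ t : Fin n → ZMod N, ∏ k, ZMod.stdAddChar (t k * ∑ i, v (σ (k, i)).1) := by
          simp only [Fintype.prod_prod_type, halfEdgeChar, mul_sum, stdAddChar_sum]
      _ = ∏ k, ∑ a : ZMod N, ZMod.stdAddChar (a * ∑ i : Fin d, v (σ (k, i)).1) :=
          (Fintype.prod_sum fun k (a : ZMod N) =>
            ZMod.stdAddChar (a * ∑ i, v (σ (k, i)).1)).symm
      _ = _ := by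
          simp only [AddChar.sum_mulShift _ (ZMod.isPrimitive_stdAddChar N), ZMod.card,
            Nat.cast_ite, Nat.cast_zero, prod_ite_zero, mem_univ, true_imp_iff, prod_const,
            card_univ, Fintype.card_fin]
  have hker : kernelMatchings d v = {σ ∈ perfectMatchings (univ : Finset (Fin n × Fin d)) |
      ∀ k, ∑ i, v (σ (k, i)).1 = 0} :=
    ext fun σ => by rw [mem_kernelMatchings, mem_filter]
  simp only [pairSum, edgeSum]
  rw [sum_comm, sum_congr rfl fun σ _ => hmatching σ, ← sum_filter, ← hker, sum_const,
    nsmul_eq_mul, mul_comm]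

end PairSums

section FarPairs

variable {X A B : Type*} [Fintype X] [DecidableEq A] [DecidableEq B]

lemma sum_colorType_fst [Fintype B] (f : X → A) (g : X → B) (a : A) :
    ∑ b, colorType (fun x => (f x, g x)) (a, b) = colorType f a := by
  simp only [colorType, card_filter, Prod.mk.injEq, ite_and]
  rw [sum_comm]
  refine sum_congr rfl fun x _ => ?_
  rw [sum_ite_irrel, sum_ite_eq, sum_const_zero, if_pos (mem_univ _)]

lemma sum_colorType_snd [Fintype A] (f : X → A) (g : X → B) (b : B) :
    ∑ a, colorType (fun x => (f x, g x)) (a, b) = colorType g b := by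
  rw [← sum_colorType_fst g f b]
  refine sum_congr rfl fun a _ => ?_
  simp only [colorType, Prod.mk.injEq, and_comm]

lemma colorType_add_hammingDist (f : X → A) (a : A) :
    colorType f a + hammingDist f (fun _ => a) = Fintype.card X :=
  card_filter_add_card_filter_not _

variable {n : ℕ} {δ : ℝ} [Fintype A]

lemma colorType_div_le_of_notMem_nearConstant {v : Fin n → A} (hn : 0 < n)
    (hv : v ∉ nearConstant A n δ) (a : A) : (colorType v a / n : ℝ) ≤ 1 - δ := by
  have hfar : δ * n < hammingDist v fun _ => a := by
    simp only [nearConstant, mem_filter_univ, not_exists, not_le] at hv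
    exact hv a
  have hsum : (colorType v a + hammingDist v (fun _ => a) : ℝ) = n := by
    exact_mod_cast (colorType_add_hammingDist v a).trans (Fintype.card_fin n)
  rw [div_le_iff₀ (by exact_mod_cast hn)]
  linarith

lemma colorType_div_mem_spreadDistributions {v t : Fin n → A} (hn : 0 < n)
    (hv : v ∉ nearConstant A n δ) (ht : t ∉ nearConstant A n δ) :
    (fun u => (colorType (fun k => (v k, t k)) u / n : ℝ)) ∈ spreadDistributions A A δ := by
  refine ⟨⟨fun u => by positivity, ?_⟩, fun a => ?_, fun b => ?_⟩
  · rw [← sum_div, ← Nat.cast_sum, sum_colorType, Fintype.card_fin,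
      div_self (Nat.cast_ne_zero.2 hn.ne')]
  · rw [← sum_div, ← Nat.cast_sum, sum_colorType_fst]
    exact colorType_div_le_of_notMem_nearConstant hn hv a
  · rw [← sum_div, ← Nat.cast_sum, sum_colorType_snd]
    exact colorType_div_le_of_notMem_nearConstant hn ht b

lemma sum_sum_norm_pairSum_compl_nearConstant_le {d N : ℕ} [NeZero N] {ρ : ℝ} (hd : d ≠ 0)
    (hn : 0 < n) (hρ₀ : 0 ≤ ρ)
    (hρ : ∀ ν ∈ spreadDistributions (ZMod N) (ZMod N) δ, ∀ y : ZMod N × ZMod N → ℂ,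
      (∀ u, ‖y u‖ = ν u ^ ((d - 1) / d : ℝ)) → ‖quadForm edgeChar y‖ ≤ ρ) :
    ∑ v ∈ (nearConstant (ZMod N) n δ)ᶜ, ∑ t ∈ (nearConstant (ZMod N) n δ)ᶜ, ‖pairSum d v t‖ ≤
      #(perfectMatchings (univ : Finset (Fin n × Fin d))) * ρ ^ (n * d / 2) *
        ((n * d + 1) * (n + 1)) ^ N ^ 2 := by
  set F := (nearConstant (ZMod N) n δ)ᶜ
  set b : ℝ := #(perfectMatchings (univ : Finset (Fin n × Fin d))) * ρ ^ (n * d / 2) *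
    (n * d + 1) ^ N ^ 2 with hb
  have hcard : Fintype.card (ZMod N × ZMod N) = N ^ 2 := by
    rw [Fintype.card_prod, ZMod.card, sq]
  have hterm : ∀ v ∈ F, ∀ t ∈ F, ‖pairSum d v t‖ ≤ b * empiricalProb fun k => (v k, t k) := by
    intro v hv t ht
    rw [hb, ← hcard]
    exact norm_edgeSum_comp_fst_le hd halfEdgeChar (fun k => (v k, t k))
      (hρ _ (colorType_div_mem_spreadDistributions hn (mem_compl.1 hv) (mem_compl.1 ht)))
  calc ∑ v ∈ F, ∑ t ∈ F, ‖pairSum d v t‖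
      ≤ ∑ v ∈ F, ∑ t ∈ F, b * empiricalProb fun k => (v k, t k) :=
        sum_le_sum fun v hv => sum_le_sum fun t ht => hterm v hv t ht
    _ = b * ∑ z ∈ F ×ˢ F, empiricalProb fun k => (z.1 k, z.2 k) := by
        simp only [mul_sum, sum_product]
    _ ≤ b * ∑ z : (Fin n → ZMod N) × (Fin n → ZMod N), empiricalProb fun k => (z.1 k, z.2 k) := by
        gcongr
        exacts [fun _ _ _ => empiricalProb_nonneg _, subset_univ _]
    _ = b * ∑ u : Fin n → ZMod N × ZMod N, empiricalProb u := by
        congr 1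
        exact (Equiv.arrowProdEquivProdArrow (Fin n) (fun _ => ZMod N)
          fun _ => ZMod N).symm.sum_comp empiricalProb
    _ ≤ b * (n + 1) ^ N ^ 2 := by
        gcongr
        simpa only [Fintype.card_fin, hcard] using
          sum_empiricalProb_le (X := Fin n) (C := ZMod N × ZMod N)
    _ = _ := by rw [hb, mul_assoc _ (_ ^ _) (_ ^ _), ← mul_pow]

end FarPairs

section SecondMoment

lemma sum_compl_le_of_symm {V : Type*} [Fintype V] [DecidableEq V] {S : V → V → ℂ} {f : V → ℝ}
    (hS : ∀ v t, S v t = S t v) (hf : ∀ v, ∑ t, S v t = f v) (A : Finset V) :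
    ∑ v ∈ Aᶜ, f v ≤
      ∑ v ∈ Aᶜ, ∑ t ∈ Aᶜ, ‖S v t‖ + ∑ v ∈ A, f v + ∑ v ∈ A, ∑ t ∈ A, ‖S v t‖ := by
  have hsplit : ∀ B : Finset V, ∑ v ∈ B, f v =
      ∑ v ∈ B, ∑ t ∈ Aᶜ, (S v t).re + ∑ v ∈ B, ∑ t ∈ A, (S v t).re := by
    intro B
    rw [← sum_add_distrib]
    refine sum_congr rfl fun v _ => ?_
    rw [sum_compl_add_sum, ← Complex.re_sum, hf, Complex.ofReal_re]
  have hcross : ∑ v ∈ Aᶜ, ∑ t ∈ A, (S v t).re = ∑ v ∈ A, ∑ t ∈ Aᶜ, (S v t).re := by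
    rw [sum_comm]
    simp only [hS]
  have hcompl : ∑ v ∈ Aᶜ, ∑ t ∈ Aᶜ, (S v t).re ≤ ∑ v ∈ Aᶜ, ∑ t ∈ Aᶜ, ‖S v t‖ :=
    sum_le_sum fun v _ => sum_le_sum fun t _ => Complex.re_le_norm _
  have hA : -∑ v ∈ A, ∑ t ∈ A, ‖S v t‖ ≤ ∑ v ∈ A, ∑ t ∈ A, (S v t).re := by
    simp only [← sum_neg_distrib]
    exact sum_le_sum fun v _ => sum_le_sum fun t _ => neg_le_of_abs_le (Complex.abs_re_le_norm _)
  linarith [hsplit A, hsplit Aᶜ]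

variable {n d p : ℕ} [Fact p.Prime] {δ ρ : ℝ}

lemma sum_card_kernelMatchings_compl_nearConstant_le (hd : d ≠ 0) (hn : 0 < n)
    (hδ : 20 * p * δ ≤ 1) (hρ₀ : 0 ≤ ρ)
    (hρ : ∀ ν ∈ spreadDistributions (ZMod p) (ZMod p) δ, ∀ y : ZMod p × ZMod p → ℂ,
      (∀ u, ‖y u‖ = ν u ^ ((d - 1) / d : ℝ)) → ‖quadForm edgeChar y‖ ≤ ρ) :
    ∑ v ∈ (nearConstant (ZMod p) n δ)ᶜ, (#(kernelMatchings d v) : ℝ) ≤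
      ∑ v ∈ nearConstant (ZMod p) n δ, (#(kernelMatchings d v) : ℝ) +
        #(perfectMatchings (univ : Finset (Fin n × Fin d))) *
          ((ρ ^ (n * d / 2) * ((n * d + 1) * (n + 1)) ^ p ^ 2 + (p * (25 / 16) ^ n) ^ 2) /
            p ^ n) := by
  have hp : (0 : ℝ) < p ^ n := by
    have := (Fact.out : p.Prime).pos
    positivity
  set M := (#(perfectMatchings (univ : Finset (Fin n × Fin d))) : ℝ)
  set A := nearConstant (ZMod p) n δ
  have hA : (#A : ℝ) ≤ p * (25 / 16) ^ n := by
    simpa only [ZMod.card] using card_nearConstant_le (R := ZMod p) (by rwa [ZMod.card])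
  have hnear : ∑ v ∈ A, ∑ t ∈ A, ‖pairSum d v t‖ ≤ M * (p * (25 / 16) ^ n) ^ 2 := by
    calc _ ≤ ∑ _v ∈ A, ∑ _t ∈ A, M := sum_le_sum fun v _ => sum_le_sum fun t _ => norm_pairSum_le
      _ = M * (#A : ℝ) ^ 2 := by
          simp only [sum_const, nsmul_eq_mul]
          ring
      _ ≤ _ := by gcongr
  have hsymm := sum_compl_le_of_symm (S := pairSum d)
    (f := fun v : Fin n → ZMod p => (p : ℝ) ^ n * #(kernelMatchings d v))
    (fun _ _ => pairSum_comm d) (fun v => by rw [sum_pairSum]; push_cast; rfl) A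
  rw [← mul_sum, ← mul_sum] at hsymm
  rw [← mul_le_mul_iff_right₀ hp, mul_add, mul_left_comm, mul_div_cancel₀ _ hp.ne']
  linarith [sum_sum_norm_pairSum_compl_nearConstant_le hd hn hρ₀ hρ]

lemma sum_card_kernelMatchings_le (hd : 3 ≤ d) (hdp : (d : ZMod p) ≠ 0) (hn : 0 < n)
    (hδ : δ * (8 * d * nearRate p d ^ 2) = 1) (hρ₀ : 0 ≤ ρ)
    (hρ : ∀ ν ∈ spreadDistributions (ZMod p) (ZMod p) δ, ∀ y : ZMod p × ZMod p → ℂ,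
      (∀ u, ‖y u‖ = ν u ^ ((d - 1) / d : ℝ)) → ‖quadForm edgeChar y‖ ≤ ρ) :
    ∑ v : Fin n → ZMod p, (#(kernelMatchings d v) : ℝ) ≤
      #(perfectMatchings (univ : Finset (Fin n × Fin d))) *
        (2 * (1 + 4 * nearRate p d * √(2 * d / n)) +
          (ρ ^ (n * d / 2) * ((n * d + 1) * (n + 1)) ^ p ^ 2 + (p * (25 / 16) ^ n) ^ 2) /
            p ^ n) := by
  have hδ₀ : 0 ≤ δ := by
    by_contra! h
    nlinarith [show 0 ≤ 8 * d * nearRate p d ^ 2 by positivity]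
  have hcoarse : 20 * p * δ ≤ 1 := by
    have hd' : (1 : ℝ) ≤ d := by exact_mod_cast (by lia : 1 ≤ d)
    have hp : (1 : ℝ) ≤ p := by exact_mod_cast (Fact.out : p.Prime).one_le
    rw [← hδ, mul_comm, nearRate]
    refine mul_le_mul_of_nonneg_left ?_ hδ₀
    calc (20 * p : ℝ) ≤ 8 * 1 * (48 * 1 * p) ^ 2 := by nlinarith
      _ ≤ 8 * d * (48 * d * p) ^ 2 := by gcongr
  have hnear := sum_card_kernelMatchings_nearConstant_le (R := ZMod p) (n := n) hd hdp
    (by rw [ZMod.card, hδ]) hn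
  rw [ZMod.card] at hnear
  rw [← sum_compl_add_sum (nearConstant (ZMod p) n δ)]
  linarith [sum_card_kernelMatchings_compl_nearConstant_le (by lia : d ≠ 0) hn hcoarse hρ₀ hρ]

end SecondMoment

section Asymptotics

open Filter Topology

lemma rpow_two_div_pow {n d : ℕ} {x : ℝ} (hx : 0 ≤ x) (hd : d ≠ 0) (hnd : Even (n * d)) :
    (x ^ (2 / d : ℝ)) ^ (n * d / 2) = x ^ n := by
  rw [← Real.rpow_natCast (x ^ _), ← Real.rpow_mul hx, ← Real.rpow_natCast,
    Nat.cast_div hnd.two_dvd two_ne_zero]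
  congr 1
  push_cast
  field_simp

lemma tendsto_pow_mul_pow_zero {d : ℕ} (hd : 2 ≤ d) (m : ℕ) {q : ℝ} (hq₀ : 0 ≤ q) (hq₁ : q < 1) :
    Tendsto (fun n : ℕ => q ^ (n * d / 2) * ((n * d + 1) * (n + 1) : ℝ) ^ m) atTop (𝓝 0) := by
  have hlim : Tendsto (fun n : ℕ => (2 * (d + 1) : ℝ) ^ m * ((n : ℝ) ^ (2 * m) * q ^ n))
      atTop (𝓝 0) := by
    simpa only [mul_zero] using (tendsto_pow_const_mul_const_pow_of_abs_lt_one (2 * m)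
      (by rwa [abs_of_nonneg hq₀])).const_mul ((2 * (d + 1) : ℝ) ^ m)
  refine squeeze_zero' (.of_forall fun n => by positivity) ?_ hlim
  filter_upwards [eventually_ge_atTop 1] with n hn
  have hn' : (1 : ℝ) ≤ n := by exact_mod_cast hn
  calc q ^ (n * d / 2) * ((n * d + 1) * (n + 1) : ℝ) ^ m
      ≤ q ^ n * ((n * d + n) * (n + n)) ^ m := by
        gcongr ?_ * ((_ + ?_) * (_ + ?_)) ^ m
        exact pow_le_pow_of_le_one hq₀ hq₁.le
          ((Nat.le_div_iff_mul_le two_pos).2 (Nat.mul_le_mul_left n hd))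
    _ = (2 * (d + 1)) ^ m * (n ^ (2 * m) * q ^ n) := by
        rw [pow_mul, mul_comm, ← mul_assoc, ← mul_pow]
        ring_nf

lemma tendsto_secondMomentBound {d : ℕ} (hd : 2 ≤ d) (m : ℕ) (K : ℝ) {p q : ℝ} (hp : 3 ≤ p)
    (hq₀ : 0 ≤ q) (hq₁ : q < 1) :
    Tendsto (fun n : ℕ => 2 * (1 + 4 * K * √(2 * d / n)) +
      (q ^ (n * d / 2) * ((n * d + 1) * (n + 1) : ℝ) ^ m + p ^ 2 * ((25 / 16) ^ 2 / p) ^ n))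
      atTop (𝓝 2) := by
  have hsqrt : Tendsto (fun n : ℕ => √(2 * d / n)) atTop (𝓝 0) := by
    simpa only [Real.sqrt_zero] using (tendsto_const_div_atTop_nhds_zero_nat (2 * d : ℝ)).sqrt
  have hgeom : Tendsto (fun n : ℕ => ((25 / 16) ^ 2 / p) ^ n) atTop (𝓝 0) :=
    tendsto_pow_atTop_nhds_zero_of_lt_one (by positivity)
      ((div_lt_one (by linarith)).2 (by linarith))
  simpa only [mul_zero, add_zero, mul_one] using (((hsqrt.const_mul (4 * K)).const_add 1).const_mul
    2).add ((tendsto_pow_mul_pow_zero hd m hq₀ hq₁).add (hgeom.const_mul (p ^ 2)))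

lemma eventually_sum_card_kernelMatchings_le {d p : ℕ} [Fact p.Prime] (hd : 3 ≤ d) (hp : p ≠ 2)
    (hdp : (d : ZMod p) ≠ 0) {ε : ℝ} (hε : 0 < ε) :
    ∀ᶠ n : ℕ in atTop, Even (n * d) → ∑ v : Fin n → ZMod p, (#(kernelMatchings d v) : ℝ) ≤
      #(perfectMatchings (univ : Finset (Fin n × Fin d))) * (2 + ε) := by
  have hp₃ : (3 : ℝ) ≤ p := by
    exact_mod_cast (Fact.out : p.Prime).two_le.lt_of_ne hp.symm
  have hδ : 0 < 8 * d * nearRate p d ^ 2 := by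
    rw [nearRate]
    positivity
  obtain ⟨ρ, hρ₀, hρ_lt, hρ⟩ := exists_lt_forall_norm_quadForm_edgeChar_le hp hd (inv_pos.2 hδ)
  have hrate : (0 : ℝ) < p ^ (2 / d : ℝ) := by positivity
  filter_upwards [eventually_gt_atTop 0, (tendsto_secondMomentBound (by lia : 2 ≤ d) (p ^ 2)
    (nearRate p d) hp₃ (div_nonneg hρ₀ hrate.le) ((div_lt_one hrate).2 hρ_lt)).eventually_le_const
      (lt_add_of_pos_right 2 hε)] with n hn hbound hnd
  refine (sum_card_kernelMatchings_le hd hdp hn (inv_mul_cancel₀ hδ.ne') hρ₀ hρ).trans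
    (mul_le_mul_of_nonneg_left (le_of_eq_of_le ?_ hbound) (Nat.cast_nonneg _))
  rw [add_div, div_pow ρ, rpow_two_div_pow (by positivity) (by lia) hnd, div_mul_eq_mul_div,
    mul_pow _ _ 2, pow_right_comm, mul_div_assoc (_ ^ 2), ← div_pow]

end Asymptotics

section SingularMatchings

lemma card_le_card_filter_mulVec_eq_zero {ι F : Type*} [Fintype ι] [DecidableEq ι] [Field F]
    [Fintype F] [DecidableEq F] {A : Matrix ι ι F} (hA : A.det = 0) :
    Fintype.card F ≤ #{v | A.mulVec v = 0} := by
  obtain ⟨v, hv, hAv⟩ := Matrix.exists_mulVec_eq_zero_iff.2 hA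
  refine card_le_card_of_injOn (· • v) (fun a _ => ?_) (smul_left_injective F hv).injOn
  simp only [coe_filter, mem_univ, true_and, Set.mem_ofPred_eq, Matrix.mulVec_smul, hAv, smul_zero]

variable (n d : ℕ) (F : Type*) [Field F] [DecidableEq F]

/-- The perfect matchings of `[n] × [d]` whose adjacency matrix is singular over `F`. -/
def singularMatchings : Finset (Equiv.Perm (Fin n × Fin d)) :=
  {σ ∈ perfectMatchings univ | ((adjMat n d σ).map (Int.cast : ℤ → F)).det = 0}

lemma singularMatchings_eq : singularMatchings n d F =
    ({σ | (∀ x, σ (σ x) = x) ∧ (∀ x, σ x ≠ x) ∧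
      ((adjMat n d σ).map (Int.cast : ℤ → F)).det = 0} : Finset (Equiv.Perm (Fin n × Fin d))) :=
  ext fun σ => by
    simp only [singularMatchings, mem_filter, mem_univ, mem_perfectMatchings_univ, true_and,
      and_assoc]

lemma card_singularMatchings_add_card_perfectMatchings_le [Fintype F] :
    (Fintype.card F - 1) * (#(singularMatchings n d F) : ℝ) +
        #(perfectMatchings (univ : Finset (Fin n × Fin d))) ≤
      ∑ v : Fin n → F, (#(kernelMatchings d v) : ℝ) := by
  have hcount : ∑ v : Fin n → F, (#(kernelMatchings d v) : ℝ) =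
      ∑ σ ∈ perfectMatchings (univ : Finset (Fin n × Fin d)),
        (#{v | ((adjMat n d σ).map (Int.cast : ℤ → F)).mulVec v = 0} : ℝ) := by
    exact_mod_cast (sum_card_bipartiteAbove_eq_sum_card_bipartiteBelow
      (s := perfectMatchings (univ : Finset (Fin n × Fin d))) (t := (univ : Finset (Fin n → F)))
      fun σ v => ((adjMat n d σ).map (Int.cast : ℤ → F)).mulVec v = 0).symm
  rw [hcount, singularMatchings, natCast_card_filter,
    card_eq_sum_ones, Nat.cast_sum, mul_sum, ← sum_add_distrib]
  refine sum_le_sum fun σ _ => ?_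
  split_ifs with hσ
  · rw [mul_one, Nat.cast_one, sub_add_cancel]
    exact_mod_cast card_le_card_filter_mulVec_eq_zero hσ
  · rw [mul_zero, zero_add]
    exact Nat.cast_le.2 (card_pos.2 ⟨0, mem_filter.2 ⟨mem_univ _, Matrix.mulVec_zero _⟩⟩)

end SingularMatchings

/-- For fixed `d ≥ 3` and an odd prime `p` with `gcd(p,d) = 1`, for every `ε > 0`,
eventually in `n` (with `nd` even), the number of fixed-point-free involutions `σ` of
`[n]×[d]` with `A(σ)` singular over `𝔽_p` is at most
`((1+ε)/(p-1)) (nd)!/(2^{nd/2}(nd/2)!)`. -/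
theorem undirected_singular_Fp (d : ℕ) (hd : 3 ≤ d) (p : ℕ) [Fact p.Prime] (hp : Odd p)
    (hgcd : Nat.gcd p d = 1) (ε : ℝ) (hε : 0 < ε) :
    ∃ N : ℕ, ∀ n : ℕ, N ≤ n → Even (n * d) →
      ((Finset.univ.filter (fun σ : Equiv.Perm (Fin n × Fin d) =>
          (∀ x, σ (σ x) = x) ∧ (∀ x, σ x ≠ x) ∧
          ((adjMat n d σ).map (Int.cast : ℤ → ZMod p)).det = 0)).card : ℝ)
        ≤ (1 + ε) / ((p : ℝ) - 1) *
            (((n * d).factorial : ℝ) / ((2 : ℝ) ^ (n * d / 2) * ((n * d / 2).factorial : ℝ))) := by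
  have hdp : (d : ZMod p) ≠ 0 := by
    rw [Ne, ZMod.natCast_eq_zero_iff, ← (Fact.out : p.Prime).coprime_iff_not_dvd]
    exact hgcd
  obtain ⟨N, hN⟩ := Filter.eventually_atTop.1
    (eventually_sum_card_kernelMatchings_le hd (hp.ne_two_of_dvd_nat dvd_rfl) hdp hε)
  refine ⟨N, fun n hn hnd => ?_⟩
  have hsing := card_singularMatchings_add_card_perfectMatchings_le n d (ZMod p)
  rw [ZMod.card] at hsing
  have hp₁ : (0 : ℝ) < p - 1 := sub_pos.2 (by exact_mod_cast (Fact.out : p.Prime).one_lt)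
  have hcard : Fintype.card (Fin n × Fin d) = n * d := by
    rw [Fintype.card_prod, Fintype.card_fin, Fintype.card_fin]
  rw [← cast_card_perfectMatchings_univ hcard hnd, ← singularMatchings_eq, div_mul_eq_mul_div,
    le_div_iff₀ hp₁]
  linarith [hN n hn hnd]
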